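/- Let ϑ be an inner function. Then the set ϑ(𝒦_a) := {f ∈ 𝒦_a : f/ϑ ∈ 𝒦_a} equals the norm-closure in 𝒦_a of the set {ϑq : q an analytic polynomial} of analytic polynomial multiples of ϑ. -/

import Mathlib

open MeasureTheory Complex Filter Set Metric Polynomial

noncomputable section

/-- Normalized arc-length measure on the unit circle 𝕋, realized on the
parameter interval `(0, 2π]` via `θ ↦ e^{iθ}`. -/
def arcM : Measure ℝ :=
  (ENNReal.ofReal (2 * Real.pi))⁻¹ • (volume.restrict (Set.Ioc 0 (2 * Real.pi)))

/-- The open unit disc 𝔻 ⊆ ℂ. -/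
def uDisc : Set ℂ := Metric.ball 0 1

/-- The unit circle 𝕋 ⊆ ℂ. -/
def uCircle : Set ℂ := Metric.sphere 0 1

/-- The boundary point `e^{iθ}`. -/
def bpt (θ : ℝ) : ℂ := Complex.exp (θ * Complex.I)

/-- `f` is analytic on the open unit disc. -/
def AnalyticOnDisc (f : ℂ → ℂ) : Prop := DifferentiableOn ℂ f uDisc

/-- The integral mean `∫_𝕋 |f(rζ)|^p dm(ζ)`. -/
def hMean (p : ℝ) (f : ℂ → ℂ) (r : ℝ) : ℝ := ∫ θ, ‖f ((r : ℂ) * bpt θ)‖ ^ p ∂arcM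

/-- Membership in the Hardy space `H^p`, `0 < p < ∞`. -/
def MemHp (p : ℝ) (f : ℂ → ℂ) : Prop :=
  AnalyticOnDisc f ∧ BddAbove (hMean p f '' Set.Ioo 0 1)

/-- The Hardy space (quasi-)norm `‖f‖_{H^p} = (sup_{0<r<1} ∫_𝕋 |f(rζ)|^p dm)^{min(1,1/p)}`. -/
def hardyNorm (p : ℝ) (f : ℂ → ℂ) : ℝ :=
  sSup (hMean p f '' Set.Ioo 0 1) ^ min 1 (1 / p)

/-- Membership in `H^∞`: bounded analytic functions on 𝔻. -/
def MemHinf (f : ℂ → ℂ) : Prop :=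
  AnalyticOnDisc f ∧ ∃ C : ℝ, ∀ z ∈ uDisc, ‖f z‖ ≤ C

/-- `F` is (a representative of) the boundary function of `f` : radial limits a.e. on 𝕋. -/
def BoundaryFn (f : ℂ → ℂ) (F : ℝ → ℂ) : Prop :=
  ∀ᵐ θ ∂arcM, Filter.Tendsto (fun r : ℝ => f ((r : ℂ) * bpt θ))
    (nhdsWithin 1 (Set.Iio 1)) (nhds (F θ))

/-- `ϑ` is an inner function: bounded analytic with unimodular boundary values a.e. -/
def IsInner (ϑ : ℂ → ℂ) : Prop :=
  MemHinf ϑ ∧ ∃ Θ : ℝ → ℂ, BoundaryFn ϑ Θ ∧ ∀ᵐ θ ∂arcM, ‖Θ θ‖ = 1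

/-- The boundary function of `f` lies in `ϑ ⋅ conj(H^p_0)`. -/
def PseudoCont (p : ℝ) (ϑ f : ℂ → ℂ) : Prop :=
  ∃ F Θ G : ℝ → ℂ, ∃ g : ℂ → ℂ,
    BoundaryFn f F ∧ BoundaryFn ϑ Θ ∧ MemHp p g ∧ g 0 = 0 ∧ BoundaryFn g G ∧
    ∀ᵐ θ ∂arcM, F θ = Θ θ * (starRingEnd ℂ) (G θ)

/-- The boundary function of `f` lies in `ϑ ⋅ conj(H^∞_0)`. -/
def PseudoContInf (ϑ f : ℂ → ℂ) : Prop :=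
  ∃ F Θ G : ℝ → ℂ, ∃ g : ℂ → ℂ,
    BoundaryFn f F ∧ BoundaryFn ϑ Θ ∧ MemHinf g ∧ g 0 = 0 ∧ BoundaryFn g G ∧
    ∀ᵐ θ ∂arcM, F θ = Θ θ * (starRingEnd ℂ) (G θ)

/-- `f` extends analytically across the boundary set `S ⊆ 𝕋`. -/
def ExtendsAcross (f : ℂ → ℂ) (S : Set ℂ) : Prop :=
  ∃ U : Set ℂ, ∃ g : ℂ → ℂ, IsOpen U ∧ S ⊆ U ∧
    DifferentiableOn ℂ g (uDisc ∪ U) ∧ Set.EqOn g f uDisc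

/-- The boundary spectrum `σ(ϑ)`: the points of 𝕋 across which `ϑ` admits no
analytic continuation. -/
def bSpectrum (ϑ : ℂ → ℂ) : Set ℂ := {ζ | ζ ∈ uCircle ∧ ¬ ExtendsAcross ϑ {ζ}}

/-- Membership in the space `K^p_ϑ` of pseudocontinuable functions, `0 < p < ∞`:
`f ∈ H^p`, the boundary function of `f` lies in `ϑ ⋅ conj(H^p_0)`, and `f`
continues analytically across `𝕋 ∖ σ(ϑ)`. -/
def MemKp (p : ℝ) (ϑ f : ℂ → ℂ) : Prop :=
  MemHp p f ∧ PseudoCont p ϑ f ∧ ExtendsAcross f (uCircle \ bSpectrum ϑ)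

/-- Membership in `K^∞_ϑ = H^∞ ∩ ϑ ⋅ conj(H^∞_0)`. -/
def MemKinf (ϑ f : ℂ → ℂ) : Prop := MemHinf f ∧ PseudoContInf ϑ f

/-- The backward shift `f ↦ (f - f(0))/z`. -/
def bShift (f : ℂ → ℂ) : ℂ → ℂ :=
  fun z => if z = 0 then deriv f 0 else (f z - f 0) / z

/-- `X ∩ K^p_ϑ` is dense in `K^p_ϑ` in the `H^p` metric. -/
def DenseInKp (p : ℝ) (ϑ : ℂ → ℂ) (X : Set (ℂ → ℂ)) : Prop :=
  ∀ f : ℂ → ℂ, MemKp p ϑ f → ∀ ε > (0 : ℝ), ∃ g ∈ X, MemKp p ϑ g ∧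
    hardyNorm p (fun z => f z - g z) < ε

/-- `X ∩ K^∞_ϑ` is dense in `K^∞_ϑ` in the weak-star topology inherited from
`L^∞(𝕋, m) = (L¹(𝕋, m))^*`. -/
def WStarDenseKinf (ϑ : ℂ → ℂ) (X : Set (ℂ → ℂ)) : Prop :=
  ∀ f : ℂ → ℂ, MemKinf ϑ f → ∀ F : ℝ → ℂ, BoundaryFn f F →
    ∀ (n : ℕ) (h : Fin n → ℝ → ℂ), (∀ i, Integrable (h i) arcM) → ∀ ε > (0 : ℝ),
      ∃ g ∈ X, MemKinf ϑ g ∧ ∃ G : ℝ → ℂ, BoundaryFn g G ∧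
        ∀ i, ‖∫ θ, (F θ - G θ) * h i θ ∂arcM‖ < ε

/-- Membership in `𝒦_a = P₊(L¹)`: `f` is the Cauchy integral of some `h ∈ L¹(𝕋, m)`. -/
def MemKa (f : ℂ → ℂ) : Prop :=
  ∃ h : ℝ → ℂ, Integrable h arcM ∧
    ∀ z ∈ uDisc, f z = ∫ θ, h θ / (1 - (starRingEnd ℂ) (bpt θ) * z) ∂arcM

/-- The norm of `𝒦_a`: `‖f‖ = inf{‖h‖_{L¹} : f = P₊ h}`. -/
def kaNorm (f : ℂ → ℂ) : ℝ :=
  sInf {c : ℝ | ∃ h : ℝ → ℂ, Integrable h arcM ∧ (∫ θ, ‖h θ‖ ∂arcM) = c ∧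
    ∀ z ∈ uDisc, f z = ∫ θ, h θ / (1 - (starRingEnd ℂ) (bpt θ) * z) ∂arcM}

/-!
Let `f = P₊F`, and let `Θ` be the boundary function of `ϑ`.

If `f` is a limit of polynomial multiples `ϑq`, consider `P₊h ↦ P₊(conj Θ · h)`. This is well
defined, because multiplication by the conjugate of an `H^∞` function preserves the kernel of `P₊`,
it is contractive, and it sends `ϑq` to `q`. With `g := P₊(conj Θ · F)` the polynomials `q` converge
to `g`, so `f = ϑg`.

Conversely let `f = ϑg` with `g = P₊G`. Split `F` and `G` into eight nonnegative densities, with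
Cauchy integrals `Pᵢ` of positive real part, and put `U := ∏ᵢ (1 + εPᵢ(r·))⁻¹`. For small `ε` the
function `f(r·)(1 - U)` is small in `𝒦_a` uniformly in `r < 1`, while `b := g(r·)U` is bounded by a
constant independent of `r`. Hence every term on the right of
`f - ϑq = (f - f(r·)) + f(r·)(1 - U) + (ϑ(r·) - ϑ)b + ϑ(b - q)`
is small for `r` close to `1` and a polynomial `q` uniformly close to `b`.
-/

open scoped Topology ComplexConjugate

/-! ### Arc length and functions analytic near the closed disc -/

instance isProbabilityMeasure_arcM : IsProbabilityMeasure arcM where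
  measure_univ := by
    simp only [arcM, Measure.smul_apply, Measure.restrict_apply MeasurableSet.univ,
      Set.univ_inter, Real.volume_Ioc, sub_zero, smul_eq_mul]
    exact ENNReal.inv_mul_cancel (by simpa using Real.pi_pos) ENNReal.ofReal_ne_top

@[simp]
lemma norm_bpt (θ : ℝ) : ‖bpt θ‖ = 1 := norm_exp_ofReal_mul_I θ

lemma continuous_bpt : Continuous bpt := by
  unfold bpt
  fun_prop

lemma conj_bpt (θ : ℝ) : conj (bpt θ) = (bpt θ)⁻¹ := (inv_eq_conj (norm_bpt θ)).symm

lemma integral_comp_bpt {E : Type*} [NormedAddCommGroup E] [NormedSpace ℝ E] (F : ℂ → E) :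
    ∫ θ, F (bpt θ) ∂arcM = Real.circleAverage F 0 1 := by
  rw [arcM, integral_smul_measure, Real.circleAverage_def,
    intervalIntegral.integral_of_le Real.two_pi_pos.le, ENNReal.toReal_inv,
    ENNReal.toReal_ofReal Real.two_pi_pos.le]
  simp [bpt, circleMap]

lemma integrable_arcM_of_continuous {E : Type*} [NormedAddCommGroup E] {F : ℝ → E}
    (hF : Continuous F) : Integrable F arcM :=
  (hF.integrableOn_Icc.mono_set Ioc_subset_Icc_self).integrable.smul_measure
    (by simpa using Real.pi_pos)

lemma zero_mem_uDisc : (0 : ℂ) ∈ uDisc := mem_ball_self one_pos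

lemma ofReal_mul_mem_uDisc {r : ℝ} (hr : r ∈ Ioo (0 : ℝ) 1) {z : ℂ} (hz : z ∈ closedBall 0 1) :
    (r : ℂ) * z ∈ uDisc := by
  rw [mem_closedBall_zero_iff] at hz
  rw [uDisc, mem_ball_zero_iff, norm_mul, norm_real, Real.norm_of_nonneg hr.1.le]
  exact (mul_le_of_le_one_right hr.1.le hz).trans_lt hr.2

lemma bpt_mem_closedBall (θ : ℝ) : bpt θ ∈ closedBall (0 : ℂ) 1 := by simp

lemma AnalyticOnDisc.analyticOnNhd_dilate {f : ℂ → ℂ} (hf : AnalyticOnDisc f) {r : ℝ}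
    (hr : r ∈ Ioo (0 : ℝ) 1) : AnalyticOnNhd ℂ (fun z => f (r * z)) (closedBall 0 1) :=
  (hf.analyticOnNhd isOpen_ball).comp (fun z _ => by fun_prop)
    fun _ hz => ofReal_mul_mem_uDisc hr hz

section ClosedDisc

variable {F : ℂ → ℂ}

lemma continuous_comp_bpt (hF : AnalyticOnNhd ℂ F (closedBall 0 1)) :
    Continuous fun θ => F (bpt θ) :=
  hF.continuousOn.comp_continuous continuous_bpt bpt_mem_closedBall

lemma integrable_comp_bpt (hF : AnalyticOnNhd ℂ F (closedBall 0 1)) :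
    Integrable (fun θ => F (bpt θ)) arcM :=
  integrable_arcM_of_continuous (continuous_comp_bpt hF)

lemma diffContOnCl_of_analyticOnNhd_closedBall (hF : AnalyticOnNhd ℂ F (closedBall 0 1)) :
    DiffContOnCl ℂ F (ball 0 |1|) := by
  rw [abs_one]
  exact (hF.differentiableOn.mono closure_ball_subset_closedBall).diffContOnCl

lemma integral_comp_bpt_eq_map_zero (hF : AnalyticOnNhd ℂ F (closedBall 0 1)) :
    ∫ θ, F (bpt θ) ∂arcM = F 0 := by
  rw [integral_comp_bpt, (diffContOnCl_of_analyticOnNhd_closedBall hF).circleAverage]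

lemma exists_bound_closedBall (hF : AnalyticOnNhd ℂ F (closedBall 0 1)) :
    ∃ C, ∀ z ∈ closedBall (0 : ℂ) 1, ‖F z‖ ≤ C :=
  (isCompact_closedBall 0 1).exists_bound_of_continuousOn hF.continuousOn

lemma exists_differentiableOn_closedBall (hF : AnalyticOnNhd ℂ F (closedBall 0 1)) :
    ∃ R : ℝ, 1 < R ∧ DifferentiableOn ℂ F (closedBall 0 R) := by
  obtain ⟨δ, hδ, hsub⟩ := (isCompact_closedBall (0 : ℂ) 1).exists_cthickening_subset_open
    (isOpen_analyticAt ℂ F) hF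
  rw [cthickening_closedBall hδ.le zero_le_one] at hsub
  exact ⟨δ + 1, by linarith, fun z hz => (hsub hz).differentiableAt.differentiableWithinAt⟩

lemma exists_polynomial_near (hF : AnalyticOnNhd ℂ F (closedBall 0 1)) {η : ℝ} (hη : 0 < η) :
    ∃ q : ℂ[X], ∀ z ∈ closedBall (0 : ℂ) 1, ‖F z - q.eval z‖ < η := by
  obtain ⟨R, hR, hFR⟩ := exists_differentiableOn_closedBall hF
  obtain ⟨T, hT, hTR⟩ := exists_between hR
  lift R to NNReal using by linarith
  lift T to NNReal using by linarith
  have htaylor := hFR.hasFPowerSeriesOnBall (by exact_mod_cast zero_lt_one.trans hR)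
  have hunif := htaylor.tendstoUniformlyOn' (r' := T) (by exact_mod_cast hTR)
  obtain ⟨n, hn⟩ := (Metric.tendstoUniformlyOn_iff.1 hunif η hη).exists
  refine ⟨∑ i ∈ Finset.range n, monomial i ((cauchyPowerSeries F 0 R).coeff i), fun z hz => ?_⟩
  have hpartial : (∑ i ∈ Finset.range n, monomial i ((cauchyPowerSeries F 0 R).coeff i)).eval z
      = (cauchyPowerSeries F 0 R).partialSum n (z - 0) := by
    simp [FormalMultilinearSeries.partialSum, eval_finsetSum, mul_comm]
  rw [hpartial, ← dist_eq_norm]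
  exact hn z (closedBall_subset_ball hT hz)

end ClosedDisc

/-! ### Cauchy integrals -/

/-- The Cauchy integral `P₊h` of a density `h` on the circle, parametrized by the angle. -/
def cauchyIntegral (h : ℝ → ℂ) (z : ℂ) : ℂ := ∫ θ, h θ / (1 - conj (bpt θ) * z) ∂arcM

lemma one_sub_norm_le_norm_one_sub_conj_bpt_mul (θ : ℝ) (z : ℂ) :
    1 - ‖z‖ ≤ ‖1 - conj (bpt θ) * z‖ := by
  simpa using norm_sub_norm_le 1 (conj (bpt θ) * z)

lemma one_sub_norm_pos {z : ℂ} (hz : z ∈ uDisc) : 0 < 1 - ‖z‖ :=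
  sub_pos.2 (mem_ball_zero_iff.1 hz)

lemma one_sub_conj_bpt_mul_ne_zero {z : ℂ} (hz : z ∈ uDisc) (θ : ℝ) :
    1 - conj (bpt θ) * z ≠ 0 :=
  norm_pos_iff.1 ((one_sub_norm_pos hz).trans_le (one_sub_norm_le_norm_one_sub_conj_bpt_mul θ z))

lemma norm_inv_one_sub_conj_bpt_mul_le {z : ℂ} (hz : z ∈ uDisc) (θ : ℝ) :
    ‖(1 - conj (bpt θ) * z)⁻¹‖ ≤ (1 - ‖z‖)⁻¹ := by
  rw [norm_inv]
  exact inv_anti₀ (one_sub_norm_pos hz) (one_sub_norm_le_norm_one_sub_conj_bpt_mul θ z)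

lemma integrable_cauchyKernel {h : ℝ → ℂ} (hh : Integrable h arcM) {z : ℂ} (hz : z ∈ uDisc) :
    Integrable (fun θ => h θ / (1 - conj (bpt θ) * z)) arcM := by
  have hcont : Continuous fun θ => (1 - conj (bpt θ) * z)⁻¹ :=
    Continuous.inv₀ (by have := continuous_bpt; fun_prop) (one_sub_conj_bpt_mul_ne_zero hz)
  simp only [div_eq_mul_inv]
  exact hh.mul_bdd hcont.aestronglyMeasurable (ae_of_all _ (norm_inv_one_sub_conj_bpt_mul_le hz))

lemma cauchyIntegral_add {h k : ℝ → ℂ} (hh : Integrable h arcM) (hk : Integrable k arcM) {z : ℂ}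
    (hz : z ∈ uDisc) :
    cauchyIntegral (fun θ => h θ + k θ) z = cauchyIntegral h z + cauchyIntegral k z := by
  simp only [cauchyIntegral, add_div]
  exact integral_add (integrable_cauchyKernel hh hz) (integrable_cauchyKernel hk hz)

lemma cauchyIntegral_sub {h k : ℝ → ℂ} (hh : Integrable h arcM) (hk : Integrable k arcM) {z : ℂ}
    (hz : z ∈ uDisc) :
    cauchyIntegral (fun θ => h θ - k θ) z = cauchyIntegral h z - cauchyIntegral k z := by
  simp only [cauchyIntegral, sub_div]
  exact integral_sub (integrable_cauchyKernel hh hz) (integrable_cauchyKernel hk hz)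

lemma cauchyIntegral_const_mul (a : ℂ) (h : ℝ → ℂ) (z : ℂ) :
    cauchyIntegral (fun θ => a * h θ) z = a * cauchyIntegral h z := by
  simp only [cauchyIntegral, mul_div_assoc]
  exact integral_const_mul _ _

lemma cauchyIntegral_zero (h : ℝ → ℂ) : cauchyIntegral h 0 = ∫ θ, h θ ∂arcM := by
  simp [cauchyIntegral]

lemma norm_cauchyIntegral_le {h : ℝ → ℂ} (hh : Integrable h arcM) {z : ℂ} (hz : z ∈ uDisc) :
    ‖cauchyIntegral h z‖ ≤ (∫ θ, ‖h θ‖ ∂arcM) * (1 - ‖z‖)⁻¹ := by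
  rw [cauchyIntegral, ← integral_mul_const]
  refine norm_integral_le_of_norm_le (hh.norm.mul_const _) (ae_of_all _ fun θ => ?_)
  rw [div_eq_mul_inv, norm_mul]
  gcongr
  exact norm_inv_one_sub_conj_bpt_mul_le hz θ

lemma cauchyIntegral_comp_bpt {F : ℂ → ℂ} (hF : AnalyticOnNhd ℂ F (closedBall 0 1)) {z : ℂ}
    (hz : z ∈ uDisc) : cauchyIntegral (fun θ => F (bpt θ)) z = F z := by
  have hformula := (diffContOnCl_of_analyticOnNhd_closedBall hF).circleAverage_smul_div
    (w := z) (by simpa [uDisc] using hz)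
  rw [← hformula, ← integral_comp_bpt, cauchyIntegral]
  refine integral_congr_ae (ae_of_all _ fun θ => ?_)
  have hb : bpt θ ≠ 0 := exp_ne_zero _
  have hden : 1 - conj (bpt θ) * z = (bpt θ - z) / bpt θ := by
    rw [conj_bpt]
    field_simp
  simp only [hden, sub_zero, smul_eq_mul]
  rw [div_div_eq_mul_div, mul_comm, mul_div_right_comm]

lemma analyticOnNhd_inv_one_sub_mul {a : ℂ} (ha : ‖a‖ < 1) :
    AnalyticOnNhd ℂ (fun w => (1 - w * a)⁻¹) (closedBall 0 1) := by
  refine AnalyticOnNhd.fun_inv (fun w _ => by fun_prop) fun w hw => ?_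
  rw [sub_ne_zero]
  refine fun h => (mul_lt_one_of_nonneg_of_lt_one_right (mem_closedBall_zero_iff.1 hw)
    (norm_nonneg a) ha).ne ?_
  rw [← norm_mul, ← h, norm_one]

lemma cauchyIntegral_conj_comp_bpt {F : ℂ → ℂ} (hF : AnalyticOnNhd ℂ F (closedBall 0 1)) {z : ℂ}
    (hz : z ∈ uDisc) : cauchyIntegral (fun θ => conj (F (bpt θ))) z = conj (F 0) := by
  have hmean := integral_comp_bpt_eq_map_zero (hF.mul
    (analyticOnNhd_inv_one_sub_mul (a := conj z) (by simpa [uDisc] using hz)))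
  simp only [zero_mul, sub_zero, inv_one, mul_one] at hmean
  rw [← hmean, ← integral_conj, cauchyIntegral]
  simp [div_eq_mul_inv]

lemma hasSum_cauchyIntegral {h : ℝ → ℂ} (hh : Integrable h arcM) {z : ℂ} (hz : z ∈ uDisc) :
    HasSum (fun n => (∫ θ, h θ * conj (bpt θ) ^ n ∂arcM) * z ^ n) (cauchyIntegral h z) := by
  have hz' : ‖z‖ < 1 := mem_ball_zero_iff.1 hz
  have hint (n : ℕ) : Integrable (fun θ => h θ * (conj (bpt θ) * z) ^ n) arcM :=
    hh.mul_bdd (c := ‖z‖ ^ n)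
      (by have := continuous_bpt; fun_prop) (ae_of_all _ fun θ => by simp)
  have hsum : Summable fun n => ∫ θ, ‖h θ * (conj (bpt θ) * z) ^ n‖ ∂arcM := by
    simp only [norm_mul, norm_pow, RCLike.norm_conj, norm_bpt, one_mul, integral_mul_const]
    exact (summable_geometric_of_lt_one (norm_nonneg z) hz').mul_left _
  have hcoeff (n : ℕ) : (∫ θ, h θ * conj (bpt θ) ^ n ∂arcM) * z ^ n =
      ∫ θ, h θ * (conj (bpt θ) * z) ^ n ∂arcM := by
    rw [← integral_mul_const]
    simp only [mul_pow, mul_assoc]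
  have hgeom : cauchyIntegral h z = ∫ θ, ∑' n : ℕ, h θ * (conj (bpt θ) * z) ^ n ∂arcM := by
    refine integral_congr_ae (ae_of_all _ fun θ => ?_)
    beta_reduce
    rw [tsum_mul_left, tsum_geometric_of_norm_lt_one (by simpa using hz'), div_eq_mul_inv]
  simp only [hcoeff, hgeom]
  exact hasSum_integral_of_summable_integral_norm hint hsum

lemma hasFPowerSeriesOnBall_cauchyIntegral {h : ℝ → ℂ} (hh : Integrable h arcM) :
    HasFPowerSeriesOnBall (cauchyIntegral h)
      (.ofScalars ℂ fun n => ∫ θ, h θ * conj (bpt θ) ^ n ∂arcM) 0 1 where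
  r_le := by
    refine FormalMultilinearSeries.le_radius_of_bound _ (∫ θ, ‖h θ‖ ∂arcM) fun n => ?_
    rw [FormalMultilinearSeries.ofScalars_norm]
    simpa using norm_integral_le_integral_norm (μ := arcM) fun θ => h θ * conj (bpt θ) ^ n
  r_pos := zero_lt_one
  hasSum {z} hz := by
    have hz' : z ∈ uDisc := by simpa [uDisc, ← ofReal_norm, ENNReal.ofReal_lt_one] using hz
    simpa [FormalMultilinearSeries.ofScalars_apply_eq, mul_comm] using hasSum_cauchyIntegral hh hz'

lemma analyticOnDisc_cauchyIntegral {h : ℝ → ℂ} (hh : Integrable h arcM) :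
    AnalyticOnDisc (cauchyIntegral h) := by
  have hdiff := (hasFPowerSeriesOnBall_cauchyIntegral hh).differentiableOn
  rwa [← ENNReal.ofReal_one, Metric.eball_ofReal] at hdiff

lemma integral_mul_conj_bpt_pow_eq_zero {k : ℝ → ℂ} (hk : Integrable k arcM)
    (hzero : ∀ z ∈ uDisc, cauchyIntegral k z = 0) (n : ℕ) :
    ∫ θ, k θ * conj (bpt θ) ^ n ∂arcM = 0 := by
  have hev : ∀ᶠ z in 𝓝 0, cauchyIntegral k z = 0 :=
    eventually_of_mem (isOpen_ball.mem_nhds zero_mem_uDisc) hzero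
  have hseries := (hasFPowerSeriesOnBall_cauchyIntegral hk).hasFPowerSeriesAt.eq_zero_of_eventually
    hev
  exact congrFun ((FormalMultilinearSeries.ofScalars_series_eq_zero ℂ).1 hseries) n

/-! ### Bounds in the space of Cauchy integrals -/

/-- `f` is the Cauchy integral of a density of `L¹`-norm at most `c`. This quantitative form of
membership in `𝒦_a` avoids the infimum in `kaNorm`, which is `0` outside `𝒦_a`. -/
def HasKaBound (f : ℂ → ℂ) (c : ℝ) : Prop :=
  ∃ h : ℝ → ℂ, Integrable h arcM ∧ (∫ θ, ‖h θ‖ ∂arcM) ≤ c ∧ ∀ z ∈ uDisc, f z = cauchyIntegral h z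

namespace HasKaBound

variable {f g : ℂ → ℂ} {c d : ℝ}

lemma add (hf : HasKaBound f c) (hg : HasKaBound g d) :
    HasKaBound (fun z => f z + g z) (c + d) := by
  obtain ⟨h, hh, hhc, hfh⟩ := hf
  obtain ⟨k, hk, hkd, hgk⟩ := hg
  refine ⟨fun θ => h θ + k θ, hh.add hk, ?_, fun z hz => ?_⟩
  · calc ∫ θ, ‖h θ + k θ‖ ∂arcM ≤ ∫ θ, ‖h θ‖ + ‖k θ‖ ∂arcM :=
        integral_mono (hh.add hk).norm (hh.norm.add hk.norm) fun θ => norm_add_le _ _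
      _ ≤ c + d := by rw [integral_add hh.norm hk.norm]; exact add_le_add hhc hkd
  · simp only [cauchyIntegral_add hh hk hz, hfh z hz, hgk z hz]

lemma const_mul (hf : HasKaBound f c) (a : ℂ) : HasKaBound (fun z => a * f z) (‖a‖ * c) := by
  obtain ⟨h, hh, hhc, hfh⟩ := hf
  refine ⟨fun θ => a * h θ, hh.const_mul a, ?_, fun z hz => ?_⟩
  · simp only [norm_mul, integral_const_mul]
    gcongr
  · simp only [cauchyIntegral_const_mul, hfh z hz]

lemma sub (hf : HasKaBound f c) (hg : HasKaBound g d) :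
    HasKaBound (fun z => f z - g z) (c + d) := by
  simpa [sub_eq_add_neg] using hf.add (hg.const_mul (-1))

lemma mono (hf : HasKaBound f c) (hcd : c ≤ d) : HasKaBound f d := by
  obtain ⟨h, hh, hhc, hfh⟩ := hf
  exact ⟨h, hh, hhc.trans hcd, hfh⟩

lemma congr (hf : HasKaBound f c) (hfg : EqOn g f uDisc) : HasKaBound g c := by
  obtain ⟨h, hh, hhc, hfh⟩ := hf
  exact ⟨h, hh, hhc, fun z hz => (hfg hz).trans (hfh z hz)⟩

lemma sum {ι : Type*} (s : Finset ι) {f : ι → ℂ → ℂ} {c : ι → ℝ}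
    (hf : ∀ i ∈ s, HasKaBound (f i) (c i)) :
    HasKaBound (fun z => ∑ i ∈ s, f i z) (∑ i ∈ s, c i) := by
  classical
  induction s using Finset.induction_on with
  | empty => exact ⟨0, integrable_zero _ _ _, by simp, by simp [cauchyIntegral]⟩
  | insert i s hi ih =>
    simp only [Finset.sum_insert hi]
    exact (hf i (Finset.mem_insert_self i s)).add
      (ih fun j hj => hf j (Finset.mem_insert_of_mem hj))

lemma kaNorm_le (hf : HasKaBound f c) : kaNorm f ≤ c := by
  obtain ⟨h, hh, hhc, hfh⟩ := hf
  refine le_trans (csInf_le ⟨0, ?_⟩ ⟨h, hh, rfl, hfh⟩) hhc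
  rintro - ⟨k, -, rfl, -⟩
  exact integral_nonneg fun θ => norm_nonneg _

lemma of_kaNorm_lt (hf : MemKa f) (hfc : kaNorm f < c) : HasKaBound f c := by
  obtain ⟨h, hh, hfh⟩ := hf
  obtain ⟨-, ⟨k, hk, rfl, hfk⟩, hkc⟩ :=
    exists_lt_of_csInf_lt (by exact ⟨_, h, hh, rfl, hfh⟩) hfc
  exact ⟨k, hk, hkc.le, hfk⟩

lemma memKa (hf : HasKaBound f c) : MemKa f := by
  obtain ⟨h, hh, -, hfh⟩ := hf
  exact ⟨h, hh, hfh⟩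

end HasKaBound

lemma hasKaBound_cauchyIntegral {h : ℝ → ℂ} (hh : Integrable h arcM) :
    HasKaBound (cauchyIntegral h) (∫ θ, ‖h θ‖ ∂arcM) :=
  ⟨h, hh, le_rfl, fun _ _ => rfl⟩

-- Adding `conj (G - G 0)` changes the density of `F` but not its Cauchy integral.
lemma hasKaBound_of_analyticOnNhd_add_conj {F G : ℂ → ℂ} (hF : AnalyticOnNhd ℂ F (closedBall 0 1))
    (hG : AnalyticOnNhd ℂ G (closedBall 0 1)) (hG0 : G 0 = 0) :
    HasKaBound F (∫ θ, ‖F (bpt θ) + conj (G (bpt θ))‖ ∂arcM) := by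
  have hFint := integrable_comp_bpt hF
  have hGint : Integrable (fun θ => conj (G (bpt θ))) arcM :=
    integrable_arcM_of_continuous (continuous_conj.comp (continuous_comp_bpt hG))
  refine ⟨fun θ => F (bpt θ) + conj (G (bpt θ)), hFint.add hGint, le_rfl, fun z hz => ?_⟩
  rw [cauchyIntegral_add hFint hGint hz, cauchyIntegral_comp_bpt hF hz,
    cauchyIntegral_conj_comp_bpt hG hz, hG0, map_zero, add_zero]

/-! ### Boundary functions of bounded analytic functions -/

lemma eventually_mem_Ioo_nhdsLT_one : ∀ᶠ r in 𝓝[<] (1 : ℝ), r ∈ Ioo (0 : ℝ) 1 :=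
  Ioo_mem_nhdsLT zero_lt_one

lemma tendsto_dilate {f : ℂ → ℂ} {z : ℂ} (hf : ContinuousAt f z) :
    Tendsto (fun r : ℝ => f (r * z)) (𝓝[<] 1) (𝓝 (f z)) := by
  have hdil : Tendsto (fun r : ℝ => (r : ℂ) * z) (𝓝[<] 1) (𝓝 z) :=
    tendsto_nhdsWithin_of_tendsto_nhds ((by fun_prop : Continuous fun r : ℝ => (r : ℂ) * z).tendsto'
      1 z (by simp))
  exact hf.tendsto.comp hdil

/-- `φ` is a bounded analytic function on the disc and `Φ` is its radial boundary function. -/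
structure HasHinfBoundary (φ : ℂ → ℂ) (Φ : ℝ → ℂ) : Prop where
  memHinf : MemHinf φ
  boundaryFn : BoundaryFn φ Φ

lemma hasHinfBoundary_of_analyticOnNhd {F : ℂ → ℂ} (hF : AnalyticOnNhd ℂ F (closedBall 0 1)) :
    HasHinfBoundary F fun θ => F (bpt θ) where
  memHinf := by
    obtain ⟨C, hC⟩ := exists_bound_closedBall hF
    exact ⟨hF.differentiableOn.mono ball_subset_closedBall,
      C, fun z hz => hC z (ball_subset_closedBall hz)⟩
  boundaryFn := ae_of_all _ fun θ => tendsto_dilate (hF _ (bpt_mem_closedBall θ)).continuousAt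

namespace HasHinfBoundary

variable {φ ψ : ℂ → ℂ} {Φ Ψ : ℝ → ℂ} {k : ℝ → ℂ}

lemma mul (hφ : HasHinfBoundary φ Φ) (hψ : HasHinfBoundary ψ Ψ) :
    HasHinfBoundary (fun z => φ z * ψ z) fun θ => Φ θ * Ψ θ where
  memHinf := by
    obtain ⟨hφan, C, hC⟩ := hφ.memHinf
    obtain ⟨hψan, D, hD⟩ := hψ.memHinf
    refine ⟨hφan.mul hψan, C * D, fun z hz => ?_⟩
    rw [norm_mul]
    exact mul_le_mul (hC z hz) (hD z hz) (norm_nonneg _) ((norm_nonneg _).trans (hC z hz))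
  boundaryFn := by
    filter_upwards [hφ.boundaryFn, hψ.boundaryFn] with θ hφθ hψθ using hφθ.mul hψθ

lemma sub (hφ : HasHinfBoundary φ Φ) (hψ : HasHinfBoundary ψ Ψ) :
    HasHinfBoundary (fun z => φ z - ψ z) fun θ => Φ θ - Ψ θ where
  memHinf := by
    obtain ⟨hφan, C, hC⟩ := hφ.memHinf
    obtain ⟨hψan, D, hD⟩ := hψ.memHinf
    exact ⟨hφan.sub hψan, C + D, fun z hz => norm_sub_le_of_le (hC z hz) (hD z hz)⟩
  boundaryFn := by
    filter_upwards [hφ.boundaryFn, hψ.boundaryFn] with θ hφθ hψθ using hφθ.sub hψθ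

lemma analyticOnNhd_dilate (hφ : HasHinfBoundary φ Φ) {r : ℝ} (hr : r ∈ Ioo (0 : ℝ) 1) :
    AnalyticOnNhd ℂ (fun z => φ (r * z)) (closedBall 0 1) :=
  AnalyticOnDisc.analyticOnNhd_dilate hφ.memHinf.1 hr

lemma aestronglyMeasurable (hφ : HasHinfBoundary φ Φ) : AEStronglyMeasurable Φ arcM := by
  obtain ⟨r, -, hr, hr1⟩ := exists_seq_strictMono_tendsto' (zero_lt_one' ℝ)
  have hr1' : Tendsto r atTop (𝓝[<] 1) :=
    tendsto_nhdsWithin_iff.2 ⟨hr1, Eventually.of_forall fun n => (hr n).2⟩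
  refine aestronglyMeasurable_of_tendsto_ae (u := atTop) (f := fun n θ => φ (r n * bpt θ))
    (fun n => (continuous_comp_bpt (hφ.analyticOnNhd_dilate (hr n))).aestronglyMeasurable) ?_
  filter_upwards [hφ.boundaryFn] with θ hθ using hθ.comp hr1'

lemma exists_bound (hφ : HasHinfBoundary φ Φ) :
    ∃ C, (∀ z ∈ uDisc, ‖φ z‖ ≤ C) ∧ ∀ᵐ θ ∂arcM, ‖Φ θ‖ ≤ C := by
  obtain ⟨C, hC⟩ := hφ.memHinf.2
  refine ⟨C, hC, ?_⟩
  filter_upwards [hφ.boundaryFn] with θ hθ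
  refine le_of_tendsto hθ.norm ?_
  filter_upwards [eventually_mem_Ioo_nhdsLT_one] with r hr
  exact hC _ (ofReal_mul_mem_uDisc hr (bpt_mem_closedBall θ))

lemma integrable (hφ : HasHinfBoundary φ Φ) : Integrable Φ arcM := by
  obtain ⟨C, -, hC⟩ := hφ.exists_bound
  exact Integrable.of_bound hφ.aestronglyMeasurable C hC

lemma integrable_conj_mul (hφ : HasHinfBoundary φ Φ) (hk : Integrable k arcM) :
    Integrable (fun θ => conj (Φ θ) * k θ) arcM := by
  obtain ⟨C, -, hC⟩ := hφ.exists_bound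
  exact hk.bdd_mul (c := C) (continuous_conj.comp_aestronglyMeasurable hφ.aestronglyMeasurable)
    (by simpa using hC)

lemma tendsto_integral_dilate_mul (hφ : HasHinfBoundary φ Φ) (hk : Integrable k arcM) :
    Tendsto (fun r : ℝ => ∫ θ, φ (r * bpt θ) * k θ ∂arcM) (𝓝[<] 1)
      (𝓝 (∫ θ, Φ θ * k θ ∂arcM)) := by
  obtain ⟨C, hC, -⟩ := hφ.exists_bound
  refine tendsto_integral_filter_of_dominated_convergence (fun θ => C * ‖k θ‖) ?_ ?_
    (hk.norm.const_mul C) ?_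
  · filter_upwards [eventually_mem_Ioo_nhdsLT_one] with r hr
    exact (continuous_comp_bpt (hφ.analyticOnNhd_dilate hr)).aestronglyMeasurable.mul
      hk.aestronglyMeasurable
  · filter_upwards [eventually_mem_Ioo_nhdsLT_one] with r hr
    refine ae_of_all _ fun θ => ?_
    rw [norm_mul]
    gcongr
    exact hC _ (ofReal_mul_mem_uDisc hr (bpt_mem_closedBall θ))
  · filter_upwards [hφ.boundaryFn] with θ hθ using hθ.mul_const _

lemma tendsto_integral_norm_dilate_sub (hφ : HasHinfBoundary φ Φ) :
    Tendsto (fun r : ℝ => ∫ θ, ‖φ (r * bpt θ) - Φ θ‖ ∂arcM) (𝓝[<] 1) (𝓝 0) := by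
  obtain ⟨C, hCφ, hCΦ⟩ := hφ.exists_bound
  rw [← integral_zero ℝ ℝ (μ := arcM)]
  refine tendsto_integral_filter_of_dominated_convergence (fun _ => C + C) ?_ ?_
    (integrable_const _) ?_
  · filter_upwards [eventually_mem_Ioo_nhdsLT_one] with r hr
    exact ((continuous_comp_bpt (hφ.analyticOnNhd_dilate hr)).aestronglyMeasurable.sub
      hφ.aestronglyMeasurable).norm
  · filter_upwards [eventually_mem_Ioo_nhdsLT_one] with r hr
    filter_upwards [hCΦ] with θ hθ
    rw [norm_norm]
    exact norm_sub_le_of_le (hCφ _ (ofReal_mul_mem_uDisc hr (bpt_mem_closedBall θ))) hθ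
  · filter_upwards [hφ.boundaryFn] with θ hθ
    simpa using (hθ.sub_const (Φ θ)).norm

lemma cauchyIntegral_eq (hφ : HasHinfBoundary φ Φ) {z : ℂ} (hz : z ∈ uDisc) :
    cauchyIntegral Φ z = φ z := by
  have hcont : ContinuousAt φ z :=
    (hφ.memHinf.1.differentiableAt (isOpen_ball.mem_nhds hz)).continuousAt
  have hlim := hφ.tendsto_integral_dilate_mul (integrable_cauchyKernel (integrable_const 1) hz)
  simp only [mul_one_div] at hlim
  refine tendsto_nhds_unique hlim ((tendsto_dilate hcont).congr' ?_)
  filter_upwards [eventually_mem_Ioo_nhdsLT_one] with r hr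
  exact (cauchyIntegral_comp_bpt (hφ.analyticOnNhd_dilate hr) hz).symm

lemma hasKaBound (hφ : HasHinfBoundary φ Φ) : HasKaBound φ (∫ θ, ‖Φ θ‖ ∂arcM) :=
  ⟨Φ, hφ.integrable, le_rfl, fun _ hz => (hφ.cauchyIntegral_eq hz).symm⟩

end HasHinfBoundary

/-! ### The conjugate of a bounded analytic function preserves the kernel of `P₊` -/

lemma eq_zero_of_forall_norm_le_mul {E : Type*} [NormedAddCommGroup E] {x : E} {C : ℝ}
    (hx : ∀ η > 0, ‖x‖ ≤ η * C) : x = 0 := by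
  have hlim : Tendsto (fun η => η * C) (𝓝[>] 0) (𝓝 0) :=
    tendsto_nhdsWithin_of_tendsto_nhds ((continuous_mul_const C).tendsto' 0 0 (zero_mul C))
  exact norm_le_zero_iff.1 (ge_of_tendsto hlim (eventually_of_mem self_mem_nhdsWithin hx))

section Annihilator

variable {k : ℝ → ℂ}

lemma integral_conj_polynomial_mul_eq_zero (hk : Integrable k arcM)
    (hzero : ∀ z ∈ uDisc, cauchyIntegral k z = 0) (q : ℂ[X]) :
    ∫ θ, conj (q.eval (bpt θ)) * k θ ∂arcM = 0 := by
  have hint (n : ℕ) : Integrable (fun θ => conj (q.coeff n) * (k θ * conj (bpt θ) ^ n)) arcM :=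
    (hk.mul_bdd (c := 1) (by have := continuous_bpt; fun_prop)
      (ae_of_all _ fun θ => by simp)).const_mul _
  have hexpand (θ : ℝ) : conj (q.eval (bpt θ)) * k θ =
      ∑ n ∈ Finset.range (q.natDegree + 1), conj (q.coeff n) * (k θ * conj (bpt θ) ^ n) := by
    rw [eval_eq_sum_range, map_sum, Finset.sum_mul]
    exact Finset.sum_congr rfl fun n _ => by rw [map_mul, map_pow]; ring
  simp only [hexpand]
  rw [integral_finsetSum _ fun n _ => hint n]
  exact Finset.sum_eq_zero fun n _ => by
    rw [integral_const_mul, integral_mul_conj_bpt_pow_eq_zero hk hzero, mul_zero]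

lemma integral_conj_comp_bpt_mul_eq_zero (hk : Integrable k arcM)
    (hzero : ∀ z ∈ uDisc, cauchyIntegral k z = 0) {F : ℂ → ℂ}
    (hF : AnalyticOnNhd ℂ F (closedBall 0 1)) : ∫ θ, conj (F (bpt θ)) * k θ ∂arcM = 0 := by
  refine eq_zero_of_forall_norm_le_mul (C := ∫ θ, ‖k θ‖ ∂arcM) fun η hη => ?_
  obtain ⟨q, hq⟩ := exists_polynomial_near hF hη
  have hFk := (hasHinfBoundary_of_analyticOnNhd hF).integrable_conj_mul hk
  have hqk := (hasHinfBoundary_of_analyticOnNhd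
    ((AnalyticOnNhd.eval_polynomial q).mono (subset_univ _))).integrable_conj_mul hk
  rw [← sub_zero (∫ θ, _ ∂arcM), ← integral_conj_polynomial_mul_eq_zero hk hzero q,
    ← integral_sub hFk hqk, ← integral_const_mul]
  refine norm_integral_le_of_norm_le (hk.norm.const_mul η) (ae_of_all _ fun θ => ?_)
  rw [← sub_mul, ← map_sub, norm_mul, RCLike.norm_conj]
  gcongr
  exact (hq _ (bpt_mem_closedBall θ)).le

variable {φ : ℂ → ℂ} {Φ : ℝ → ℂ}

lemma HasHinfBoundary.integral_conj_mul_eq_zero (hφ : HasHinfBoundary φ Φ)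
    (hk : Integrable k arcM) (hzero : ∀ z ∈ uDisc, cauchyIntegral k z = 0) :
    ∫ θ, conj (Φ θ) * k θ ∂arcM = 0 := by
  have hconj (G : ℝ → ℂ) :
      ∫ θ, G θ * conj (k θ) ∂arcM = conj (∫ θ, conj (G θ) * k θ ∂arcM) := by
    rw [← integral_conj]
    simp only [map_mul, conj_conj]
  have hlim := hφ.tendsto_integral_dilate_mul (k := fun θ => conj (k θ))
    (conjCLE.integrable_comp_iff.2 hk)
  rw [← map_eq_zero (starRingEnd ℂ), ← hconj]
  refine tendsto_nhds_unique hlim (tendsto_const_nhds.congr' ?_)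
  filter_upwards [eventually_mem_Ioo_nhdsLT_one] with r hr
  rw [hconj, integral_conj_comp_bpt_mul_eq_zero hk hzero (hφ.analyticOnNhd_dilate hr), map_zero]

-- `conj Φ` times the Cauchy kernel is again the conjugate of a bounded analytic function.
lemma HasHinfBoundary.cauchyIntegral_conj_mul_eq_zero (hφ : HasHinfBoundary φ Φ)
    (hk : Integrable k arcM) (hzero : ∀ z ∈ uDisc, cauchyIntegral k z = 0) {z : ℂ}
    (hz : z ∈ uDisc) : cauchyIntegral (fun θ => conj (Φ θ) * k θ) z = 0 := by
  have hker := hasHinfBoundary_of_analyticOnNhd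
    (analyticOnNhd_inv_one_sub_mul (a := conj z) (by simpa [uDisc] using hz))
  rw [← (hφ.mul hker).integral_conj_mul_eq_zero hk hzero, cauchyIntegral]
  congr 1 with θ
  simp only [map_mul, map_inv₀, map_sub, map_one, conj_conj]
  ring

end Annihilator

/-! ### Limits of multiples of an inner function are divisible by it -/

section Division

variable {ϑ : ℂ → ℂ} {Θ : ℝ → ℂ}

-- `P₊h ↦ P₊(conj Θ * h)` inverts multiplication by `ϑ` on functions analytic near the closed disc.
lemma cauchyIntegral_conj_mul_sub_eq (hϑ : HasHinfBoundary ϑ Θ)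
    (hΘ : ∀ᵐ θ ∂arcM, ‖Θ θ‖ = 1) {F : ℂ → ℂ} (hF : AnalyticOnNhd ℂ F (closedBall 0 1))
    {h w : ℝ → ℂ} (hh : Integrable h arcM) (hw : Integrable w arcM)
    (hrep : ∀ z ∈ uDisc, cauchyIntegral h z - ϑ z * F z = cauchyIntegral w z) {z : ℂ}
    (hz : z ∈ uDisc) :
    cauchyIntegral (fun θ => conj (Θ θ) * h θ) z - F z =
      cauchyIntegral (fun θ => conj (Θ θ) * w θ) z := by
  have hϑF := hϑ.mul (hasHinfBoundary_of_analyticOnNhd hF)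
  have hhF : Integrable (fun θ => h θ - Θ θ * F (bpt θ)) arcM := hh.sub hϑF.integrable
  have hkernel : ∀ z ∈ uDisc, cauchyIntegral (fun θ => h θ - Θ θ * F (bpt θ) - w θ) z = 0 := by
    intro z hz
    rw [cauchyIntegral_sub hhF hw hz, cauchyIntegral_sub hh hϑF.integrable hz,
      hϑF.cauchyIntegral_eq hz, hrep z hz, sub_self]
  have hcancel : ∀ᵐ θ ∂arcM, conj (Θ θ) * (h θ - Θ θ * F (bpt θ) - w θ) =
      conj (Θ θ) * h θ - F (bpt θ) - conj (Θ θ) * w θ := by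
    filter_upwards [hΘ] with θ hθ
    have hunit : conj (Θ θ) * Θ θ = 1 := by rw [conj_mul', hθ, ofReal_one, one_pow]
    linear_combination -F (bpt θ) * hunit
  have hvanish : cauchyIntegral (fun θ => conj (Θ θ) * (h θ - Θ θ * F (bpt θ) - w θ)) z = 0 :=
    hϑ.cauchyIntegral_conj_mul_eq_zero (hhF.sub hw) hkernel hz
  have hhΘ := hϑ.integrable_conj_mul hh
  have hFint := integrable_comp_bpt hF
  have hhΘF : Integrable (fun θ => conj (Θ θ) * h θ - F (bpt θ)) arcM := hhΘ.sub hFint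
  rw [← sub_eq_zero, ← hvanish, ← cauchyIntegral_comp_bpt hF hz, ← cauchyIntegral_sub hhΘ hFint hz,
    ← cauchyIntegral_sub hhΘF (hϑ.integrable_conj_mul hw) hz]
  refine integral_congr_ae ?_
  filter_upwards [hcancel] with θ hθ
  rw [hθ]

lemma norm_sub_mul_cauchyIntegral_conj_mul_le (hϑ : HasHinfBoundary ϑ Θ)
    (hΘ : ∀ᵐ θ ∂arcM, ‖Θ θ‖ = 1) {F : ℂ → ℂ} (hF : AnalyticOnNhd ℂ F (closedBall 0 1))
    {h : ℝ → ℂ} (hh : Integrable h arcM) {c : ℝ}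
    (hc : HasKaBound (fun z => cauchyIntegral h z - ϑ z * F z) c) {z : ℂ} (hz : z ∈ uDisc) :
    ‖cauchyIntegral h z - ϑ z * cauchyIntegral (fun θ => conj (Θ θ) * h θ) z‖ ≤
      c * ((1 + ‖ϑ z‖) * (1 - ‖z‖)⁻¹) := by
  obtain ⟨w, hw, hwc, hrep⟩ := hc
  have hquot := cauchyIntegral_conj_mul_sub_eq hϑ hΘ hF hh hw hrep hz
  have hpos : 0 ≤ (1 - ‖z‖)⁻¹ := inv_nonneg.2 (one_sub_norm_pos hz).le
  have hnorm : ∫ θ, ‖conj (Θ θ) * w θ‖ ∂arcM = ∫ θ, ‖w θ‖ ∂arcM := by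
    refine integral_congr_ae ?_
    filter_upwards [hΘ] with θ hθ
    simp [hθ]
  have hwz : ‖cauchyIntegral w z‖ ≤ c * (1 - ‖z‖)⁻¹ :=
    (norm_cauchyIntegral_le hw hz).trans (by gcongr)
  have hΘwz : ‖cauchyIntegral (fun θ => conj (Θ θ) * w θ) z‖ ≤ c * (1 - ‖z‖)⁻¹ :=
    (norm_cauchyIntegral_le (hϑ.integrable_conj_mul hw) hz).trans (by rw [hnorm]; gcongr)
  calc ‖cauchyIntegral h z - ϑ z * cauchyIntegral (fun θ => conj (Θ θ) * h θ) z‖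
      = ‖cauchyIntegral w z - ϑ z * cauchyIntegral (fun θ => conj (Θ θ) * w θ) z‖ := by
        rw [← hquot, ← hrep z hz]
        ring_nf
    _ ≤ c * (1 - ‖z‖)⁻¹ + ‖ϑ z‖ * (c * (1 - ‖z‖)⁻¹) :=
        norm_sub_le_of_le hwz (by rw [norm_mul]; gcongr)
    _ = c * ((1 + ‖ϑ z‖) * (1 - ‖z‖)⁻¹) := by ring

lemma exists_memKa_factor_of_forall_kaNorm_lt (hϑ : HasHinfBoundary ϑ Θ)
    (hΘ : ∀ᵐ θ ∂arcM, ‖Θ θ‖ = 1) {f : ℂ → ℂ} (hf : MemKa f)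
    (hclosure : ∀ ε > 0, ∃ q : ℂ[X], kaNorm (fun z => f z - ϑ z * q.eval z) < ε) :
    ∃ g, MemKa g ∧ ∀ z ∈ uDisc, f z = ϑ z * g z := by
  obtain ⟨h, hh, hfh : EqOn f (cauchyIntegral h) uDisc⟩ := hf
  refine ⟨cauchyIntegral fun θ => conj (Θ θ) * h θ,
    (hasKaBound_cauchyIntegral (hϑ.integrable_conj_mul hh)).memKa, fun z hz => ?_⟩
  refine sub_eq_zero.1 (eq_zero_of_forall_norm_le_mul
    (C := (1 + ‖ϑ z‖) * (1 - ‖z‖)⁻¹) fun ε hε => ?_)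
  obtain ⟨q, hq⟩ := hclosure ε hε
  have hqan : AnalyticOnNhd ℂ (fun z => q.eval z) (closedBall 0 1) :=
    (AnalyticOnNhd.eval_polynomial q).mono (subset_univ _)
  have hfKa : HasKaBound f (∫ θ, ‖h θ‖ ∂arcM) := ⟨h, hh, le_rfl, hfh⟩
  have hϑq := (hϑ.mul (hasHinfBoundary_of_analyticOnNhd hqan)).hasKaBound
  have hsmall := HasKaBound.of_kaNorm_lt (hfKa.sub hϑq).memKa hq
  rw [hfh hz]
  exact norm_sub_mul_cauchyIntegral_conj_mul_le hϑ hΘ hqan hh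
    (hsmall.congr fun w hw => by simp only [hfh hw]) hz

end Division

/-! ### The damping factor `(1 + εw)⁻¹` on the right half-plane -/

/-- The damping factor `(1 + εw)⁻¹`: for `Re w ≥ 0` it is a contraction that tends to `1` as
`ε → 0`, while its product with `w` is bounded by `ε⁻¹`. -/
def damp (ε : ℝ) (w : ℂ) : ℂ := (1 + ε * w)⁻¹

section Damp

variable {ε : ℝ} {w : ℂ}

lemma one_le_re_one_add_mul (hε : 0 ≤ ε) (hw : 0 ≤ w.re) : 1 ≤ (1 + ε * w).re := by
  rw [add_re, one_re, re_ofReal_mul]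
  exact le_add_of_nonneg_right (mul_nonneg hε hw)

lemma one_add_mul_ne_zero (hε : 0 ≤ ε) (hw : 0 ≤ w.re) : 1 + ε * w ≠ 0 := fun h =>
  absurd (one_le_re_one_add_mul hε hw) (by rw [h, zero_re]; exact zero_lt_one.not_ge)

lemma norm_damp_le_one (hε : 0 ≤ ε) (hw : 0 ≤ w.re) : ‖damp ε w‖ ≤ 1 := by
  rw [damp, norm_inv]
  exact inv_le_one_of_one_le₀ ((one_le_re_one_add_mul hε hw).trans (re_le_norm _))

lemma one_sub_damp (hε : 0 ≤ ε) (hw : 0 ≤ w.re) : 1 - damp ε w = ε * (w * damp ε w) := by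
  have := one_add_mul_ne_zero hε hw
  rw [damp]
  field_simp
  ring

lemma norm_one_sub_damp (hε : 0 ≤ ε) (hw : 0 ≤ w.re) : ‖1 - damp ε w‖ = ε * ‖w * damp ε w‖ := by
  rw [one_sub_damp hε hw, norm_mul, norm_real, Real.norm_of_nonneg hε]

lemma norm_one_sub_damp_le_one (hε : 0 ≤ ε) (hw : 0 ≤ w.re) : ‖1 - damp ε w‖ ≤ 1 := by
  have hle : ‖(ε : ℂ) * w‖ ≤ ‖1 + ε * w‖ := by
    rw [← sq_le_sq₀ (norm_nonneg _) (norm_nonneg _), Complex.sq_norm, Complex.sq_norm]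
    have := mul_nonneg hε hw
    simp only [normSq_apply, add_re, add_im, one_re, one_im, re_ofReal_mul, im_ofReal_mul]
    nlinarith
  rw [one_sub_damp hε hw, ← mul_assoc, damp, norm_mul, norm_inv, ← div_eq_mul_inv]
  exact div_le_one_of_le₀ hle (norm_nonneg _)

lemma norm_mul_damp_le_inv (hε : 0 < ε) (hw : 0 ≤ w.re) : ‖w * damp ε w‖ ≤ ε⁻¹ := by
  rw [← one_div, le_div_iff₀' hε, ← norm_one_sub_damp hε.le hw]
  exact norm_one_sub_damp_le_one hε.le hw

lemma re_mul_damp (hε : 0 ≤ ε) (hw : 0 ≤ w.re) :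
    (w * damp ε w).re = w.re * ‖damp ε w‖ ^ 2 + ε * ‖w * damp ε w‖ ^ 2 := by
  have hne := one_add_mul_ne_zero hε hw
  have hself : w * damp ε w = w * (‖damp ε w‖ ^ 2 : ℝ) + (ε * ‖w * damp ε w‖ ^ 2 : ℝ) := by
    have hinv : conj (1 + ε * w) * conj (damp ε w) = 1 := by
      rw [← map_mul, damp, mul_inv_cancel₀ hne, map_one]
    push_cast
    rw [← mul_conj', ← mul_conj', map_mul]
    rw [map_add, map_mul, map_one, conj_ofReal] at hinv
    linear_combination -(w * damp ε w) * hinv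
  conv_lhs => rw [hself]
  rw [add_re, re_mul_ofReal, ofReal_re]

lemma norm_damp_sub_conj_le (hε : 0 ≤ ε) (hw : 0 ≤ w.re) :
    ‖damp ε w - conj (damp ε w)‖ ≤ 2 * ε * ‖w * damp ε w‖ * ‖damp ε w‖ := by
  have hinv : (1 + ε * w) * damp ε w = 1 := mul_inv_cancel₀ (one_add_mul_ne_zero hε hw)
  have hinv' : (1 + ε * conj w) * conj (damp ε w) = 1 := by simpa using congrArg conj hinv
  have hexpand : damp ε w - conj (damp ε w) =
      ε * (damp ε w * conj (w * damp ε w)) - ε * (w * damp ε w * conj (damp ε w)) := by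
    rw [map_mul]
    linear_combination -damp ε w * hinv' + conj (damp ε w) * hinv
  rw [hexpand]
  refine (norm_sub_le _ _).trans_eq ?_
  simp only [norm_mul, RCLike.norm_conj, norm_real, Real.norm_of_nonneg hε]
  ring

end Damp

section Prod

variable {ι : Type*}

lemma norm_prod_le_one {R : Type*} [NormedCommRing R] [NormOneClass R] (s : Finset ι) {v : ι → R}
    (hv : ∀ i ∈ s, ‖v i‖ ≤ 1) : ‖∏ i ∈ s, v i‖ ≤ 1 :=
  (Finset.norm_prod_le s v).trans (Finset.prod_le_one (fun _ _ => norm_nonneg _) hv)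

lemma norm_prod_sub_prod_le {R : Type*} [NormedCommRing R] [NormOneClass R] (s : Finset ι)
    {v w : ι → R} (hv : ∀ i ∈ s, ‖v i‖ ≤ 1) (hw : ∀ i ∈ s, ‖w i‖ ≤ 1) :
    ‖∏ i ∈ s, v i - ∏ i ∈ s, w i‖ ≤ ∑ i ∈ s, ‖v i - w i‖ := by
  classical
  induction s using Finset.induction_on with
  | empty => simp
  | insert i s hi ih =>
    rw [Finset.forall_mem_insert] at hv hw
    rw [Finset.prod_insert hi, Finset.prod_insert hi, Finset.sum_insert hi]
    calc ‖v i * ∏ i ∈ s, v i - w i * ∏ i ∈ s, w i‖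
        = ‖(v i - w i) * ∏ i ∈ s, v i + w i * (∏ i ∈ s, v i - ∏ i ∈ s, w i)‖ := by ring_nf
      _ ≤ ‖v i - w i‖ * 1 + 1 * ∑ i ∈ s, ‖v i - w i‖ := by
        refine norm_add_le_of_le ((norm_mul_le _ _).trans ?_) ((norm_mul_le _ _).trans ?_)
        · gcongr
          exact norm_prod_le_one s hv.2
        · gcongr
          exacts [hw.1, ih hv.2 hw.2]
      _ = ‖v i - w i‖ + ∑ i ∈ s, ‖v i - w i‖ := by ring

variable [Fintype ι] {ε : ℝ} {w : ι → ℂ}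

lemma norm_one_sub_prod_damp_le (hε : 0 ≤ ε) (hw : ∀ i, 0 ≤ (w i).re) :
    ‖1 - ∏ i, damp ε (w i)‖ ≤ ∑ i, ‖1 - damp ε (w i)‖ := by
  simpa using norm_prod_sub_prod_le Finset.univ (v := fun _ => (1 : ℂ)) (by simp)
    fun i _ => norm_damp_le_one hε (hw i)

-- The factor `damp ε (w j)` of the product absorbs the unbounded `w j`.
lemma norm_mul_norm_prod_damp_sub_conj_le (hε : 0 ≤ ε) (hw : ∀ i, 0 ≤ (w i).re) (j : ι) :
    ‖w j‖ * ‖∏ i, damp ε (w i) - conj (∏ i, damp ε (w i))‖ ≤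
      ∑ l, 2 * ε * ‖w j * damp ε (w j)‖ * ‖w l * damp ε (w l)‖ := by
  classical
  have hle (i : ι) : ‖damp ε (w i)‖ ≤ 1 := norm_damp_le_one hε (hw i)
  rw [← Finset.mul_prod_erase _ _ (Finset.mem_univ j),
    ← Finset.add_sum_erase _ _ (Finset.mem_univ j)]
  set u := damp ε (w j)
  set V := ∏ i ∈ Finset.univ.erase j, damp ε (w i) with hV
  have hV1 : ‖V‖ ≤ 1 := norm_prod_le_one _ fun i _ => hle i
  have hVconj : ‖V - conj V‖ ≤ ∑ l ∈ Finset.univ.erase j, 2 * ε * ‖w l * damp ε (w l)‖ := by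
    rw [hV, map_prod]
    refine (norm_prod_sub_prod_le _ (fun i _ => hle i) fun i _ => by simpa using hle i).trans
      (Finset.sum_le_sum fun l _ => ?_)
    exact (norm_damp_sub_conj_le hε (hw l)).trans (mul_le_of_le_one_right (by positivity) (hle l))
  calc ‖w j‖ * ‖u * V - conj (u * V)‖
      = ‖w j‖ * ‖(u - conj u) * V + conj u * (V - conj V)‖ := by rw [map_mul]; ring_nf
    _ ≤ ‖w j‖ * (‖u - conj u‖ * ‖V‖ + ‖u‖ * ‖V - conj V‖) := by
        gcongr
        refine (norm_add_le _ _).trans_eq ?_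
        rw [norm_mul, norm_mul, RCLike.norm_conj]
    _ ≤ ‖w j‖ * (2 * ε * ‖w j * u‖ * ‖u‖ * 1 +
          ‖u‖ * ∑ l ∈ Finset.univ.erase j, 2 * ε * ‖w l * damp ε (w l)‖) := by
        gcongr
        exact norm_damp_sub_conj_le hε (hw j)
    _ = 2 * ε * ‖w j * u‖ * ‖w j * u‖ +
          ∑ l ∈ Finset.univ.erase j, 2 * ε * ‖w j * u‖ * ‖w l * damp ε (w l)‖ := by
        simp only [norm_mul, mul_add, Finset.mul_sum]
        congr 1
        · ring
        · exact Finset.sum_congr rfl fun l _ => by ring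

end Prod

/-! ### Functions with positive real part -/

/-- `F` is analytic near the closed unit disc with `F 0 = c` real and `Re F ≥ c / 2`, as is the
Cauchy integral of a positive smooth density of mass `c`. -/
structure IsCaratheodory (F : ℂ → ℂ) (c : ℝ) : Prop where
  analyticOnNhd : AnalyticOnNhd ℂ F (closedBall 0 1)
  map_zero : F 0 = c
  half_le_re : ∀ z ∈ closedBall (0 : ℂ) 1, c / 2 ≤ (F z).re

/-- The `L¹`-size of the error made when the positive density `2 Re F` is damped by `damp ε G`. -/
def dampingDefect (ε : ℝ) (F G : ℂ → ℂ) : ℝ :=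
  ∫ θ, 2 * (F (bpt θ)).re * ‖1 - damp ε (G (bpt θ))‖ ∂arcM

namespace IsCaratheodory

variable {F : ℂ → ℂ} {c : ℝ}

lemma nonneg (hF : IsCaratheodory F c) : 0 ≤ c := by
  have := hF.half_le_re 0 (mem_closedBall_self zero_le_one)
  rw [hF.map_zero, ofReal_re] at this
  linarith

lemma re_nonneg (hF : IsCaratheodory F c) {z : ℂ} (hz : z ∈ closedBall 0 1) : 0 ≤ (F z).re :=
  (div_nonneg hF.nonneg zero_le_two).trans (hF.half_le_re z hz)

lemma continuous_re_comp_bpt (hF : IsCaratheodory F c) : Continuous fun θ => (F (bpt θ)).re :=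
  continuous_re.comp (continuous_comp_bpt hF.analyticOnNhd)

lemma integrable_re_comp_bpt (hF : IsCaratheodory F c) :
    Integrable (fun θ => (F (bpt θ)).re) arcM :=
  integrable_arcM_of_continuous hF.continuous_re_comp_bpt

lemma integral_re_comp_bpt (hF : IsCaratheodory F c) : ∫ θ, (F (bpt θ)).re ∂arcM = c := by
  have hre : ∫ θ, (F (bpt θ)).re ∂arcM = (∫ θ, F (bpt θ) ∂arcM).re :=
    integral_re (integrable_comp_bpt hF.analyticOnNhd)
  rw [hre, integral_comp_bpt_eq_map_zero hF.analyticOnNhd, hF.map_zero, ofReal_re]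

lemma hasKaBound (hF : IsCaratheodory F c) : HasKaBound F c := by
  refine (hasKaBound_of_analyticOnNhd_add_conj (G := fun z => F z - c) hF.analyticOnNhd
    (hF.analyticOnNhd.sub analyticOnNhd_const) (by rw [hF.map_zero, sub_self])).mono (le_of_eq ?_)
  have hdensity (θ : ℝ) : ‖F (bpt θ) + conj (F (bpt θ) - c)‖ = 2 * (F (bpt θ)).re - c := by
    have hle := hF.half_le_re _ (bpt_mem_closedBall θ)
    rw [map_sub, conj_ofReal, ← add_sub_assoc, add_conj, ← ofReal_sub, norm_real,
      Real.norm_of_nonneg (by linarith)]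
  simp only [hdensity]
  rw [integral_sub (hF.integrable_re_comp_bpt.const_mul 2) (integrable_const c),
    integral_const_mul, hF.integral_re_comp_bpt, integral_const, probReal_univ, one_smul]
  ring

variable {ε : ℝ}

lemma analyticOnNhd_damp (hF : IsCaratheodory F c) (hε : 0 ≤ ε) :
    AnalyticOnNhd ℂ (fun z => damp ε (F z)) (closedBall 0 1) :=
  (analyticOnNhd_const.add (analyticOnNhd_const.mul hF.analyticOnNhd)).fun_inv
    fun _ hz => one_add_mul_ne_zero hε (hF.re_nonneg hz)

lemma continuous_damp_comp_bpt (hF : IsCaratheodory F c) (hε : 0 ≤ ε) :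
    Continuous fun θ => damp ε (F (bpt θ)) :=
  continuous_comp_bpt (hF.analyticOnNhd_damp hε)

lemma integrable_norm_mul_damp_sq (hF : IsCaratheodory F c) (hε : 0 ≤ ε) :
    Integrable (fun θ => ε * ‖F (bpt θ) * damp ε (F (bpt θ))‖ ^ 2) arcM :=
  integrable_arcM_of_continuous (continuous_const.mul
    (((continuous_comp_bpt hF.analyticOnNhd).mul (hF.continuous_damp_comp_bpt hε)).norm.pow 2))

lemma integrable_re_mul_norm_damp_sq (hF : IsCaratheodory F c) (hε : 0 ≤ ε) :
    Integrable (fun θ => (F (bpt θ)).re * ‖damp ε (F (bpt θ))‖ ^ 2) arcM :=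
  integrable_arcM_of_continuous
    (hF.continuous_re_comp_bpt.mul ((hF.continuous_damp_comp_bpt hε).norm.pow 2))

lemma integral_re_mul_damp_le (hF : IsCaratheodory F c) (hε : 0 ≤ ε) :
    ∫ θ, (F (bpt θ) * damp ε (F (bpt θ))).re ∂arcM ≤ c := by
  have han : AnalyticOnNhd ℂ (fun z => F z * damp ε (F z)) (closedBall 0 1) :=
    hF.analyticOnNhd.mul (hF.analyticOnNhd_damp hε)
  have hre : ∫ θ, (F (bpt θ) * damp ε (F (bpt θ))).re ∂arcM =
      (∫ θ, F (bpt θ) * damp ε (F (bpt θ)) ∂arcM).re := integral_re (integrable_comp_bpt han)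
  rw [hre, integral_comp_bpt_eq_map_zero han, hF.map_zero]
  calc (c * damp ε c : ℂ).re ≤ ‖(c : ℂ)‖ * ‖damp ε c‖ := (re_le_norm _).trans_eq (norm_mul _ _)
    _ ≤ ‖(c : ℂ)‖ * 1 := by gcongr; exact norm_damp_le_one hε (by simpa using hF.nonneg)
    _ = c := by rw [mul_one, norm_real, Real.norm_of_nonneg hF.nonneg]

lemma integral_norm_mul_damp_sq_le_sub (hF : IsCaratheodory F c) (hε : 0 ≤ ε) :
    ∫ θ, ε * ‖F (bpt θ) * damp ε (F (bpt θ))‖ ^ 2 ∂arcM ≤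
      c - ∫ θ, (F (bpt θ)).re * ‖damp ε (F (bpt θ))‖ ^ 2 ∂arcM := by
  have hle := hF.integral_re_mul_damp_le hε
  simp only [re_mul_damp hε (hF.re_nonneg (bpt_mem_closedBall _))] at hle
  rw [integral_add (hF.integrable_re_mul_norm_damp_sq hε)
    (hF.integrable_norm_mul_damp_sq hε)] at hle
  linarith

lemma integral_norm_one_sub_damp_le (hF : IsCaratheodory F c) (hε : 0 ≤ ε) :
    ∫ θ, ‖1 - damp ε (F (bpt θ))‖ ∂arcM ≤ √(ε * c) := by
  have hre (θ : ℝ) : 0 ≤ (F (bpt θ)).re := hF.re_nonneg (bpt_mem_closedBall θ)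
  have hcont : Continuous fun θ => ‖1 - damp ε (F (bpt θ))‖ :=
    (continuous_const.sub (hF.continuous_damp_comp_bpt hε)).norm
  refine Real.le_sqrt_of_sq_le ?_
  calc (∫ θ, ‖1 - damp ε (F (bpt θ))‖ ∂arcM) ^ 2
      ≤ ∫ θ, ‖1 - damp ε (F (bpt θ))‖ ^ 2 ∂arcM :=
        (even_two.convexOn_pow (𝕜 := ℝ)).map_integral_le (continuous_pow 2).continuousOn
          isClosed_univ (by simp) (integrable_arcM_of_continuous hcont)
          (integrable_arcM_of_continuous (hcont.pow 2))
    _ = ε * ∫ θ, ε * ‖F (bpt θ) * damp ε (F (bpt θ))‖ ^ 2 ∂arcM := by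
        rw [← integral_const_mul]
        exact integral_congr_ae (ae_of_all _ fun θ => by
          beta_reduce
          rw [norm_one_sub_damp hε (hre θ)]
          ring)
    _ ≤ ε * c := by
        refine mul_le_mul_of_nonneg_left ?_ hε
        have hnonneg : 0 ≤ ∫ θ, (F (bpt θ)).re * ‖damp ε (F (bpt θ))‖ ^ 2 ∂arcM :=
          integral_nonneg fun θ => mul_nonneg (hre θ) (by positivity)
        linarith [hF.integral_norm_mul_damp_sq_le_sub hε]

lemma integrable_re_mul_norm_one_sub_damp {G : ℂ → ℂ} {d : ℝ} (hF : IsCaratheodory F c)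
    (hG : IsCaratheodory G d) (hε : 0 ≤ ε) :
    Integrable (fun θ => 2 * (F (bpt θ)).re * ‖1 - damp ε (G (bpt θ))‖) arcM :=
  integrable_arcM_of_continuous ((continuous_const.mul hF.continuous_re_comp_bpt).mul
    (continuous_const.sub (hG.continuous_damp_comp_bpt hε)).norm)

lemma integral_norm_mul_damp_sq_le_dampingDefect (hF : IsCaratheodory F c) (hε : 0 ≤ ε) :
    ∫ θ, ε * ‖F (bpt θ) * damp ε (F (bpt θ))‖ ^ 2 ∂arcM ≤ dampingDefect ε F F := by
  refine (hF.integral_norm_mul_damp_sq_le_sub hε).trans ?_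
  rw [← hF.integral_re_comp_bpt, ← integral_sub hF.integrable_re_comp_bpt
    (hF.integrable_re_mul_norm_damp_sq hε)]
  refine integral_mono (hF.integrable_re_comp_bpt.sub (hF.integrable_re_mul_norm_damp_sq hε))
    (hF.integrable_re_mul_norm_one_sub_damp hF hε) fun θ => ?_
  have hre := hF.re_nonneg (bpt_mem_closedBall θ)
  have hle : ‖damp ε (F (bpt θ))‖ ≤ 1 := norm_damp_le_one hε hre
  have hsub : 1 - ‖damp ε (F (bpt θ))‖ ≤ ‖1 - damp ε (F (bpt θ))‖ := by
    simpa using norm_sub_norm_le (1 : ℂ) (damp ε (F (bpt θ)))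
  have hsq : 1 - ‖damp ε (F (bpt θ))‖ ^ 2 ≤ 2 * ‖1 - damp ε (F (bpt θ))‖ := by
    nlinarith [norm_nonneg (damp ε (F (bpt θ)))]
  beta_reduce
  linarith [mul_le_mul_of_nonneg_left hsq hre]

lemma dampingDefect_le {R G : ℂ → ℂ} {b d M : ℝ} (hF : IsCaratheodory F c)
    (hR : IsCaratheodory R b) (hG : IsCaratheodory G d) (hε : 0 ≤ ε) (hM : 0 ≤ M)
    (hle : ∀ z ∈ closedBall (0 : ℂ) 1, (F z).re ≤ M + (R z).re) :
    dampingDefect ε F G ≤ 2 * M * √(ε * d) + 2 * b := by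
  have hint : Integrable (fun θ => ‖1 - damp ε (G (bpt θ))‖) arcM :=
    integrable_arcM_of_continuous (continuous_const.sub (hG.continuous_damp_comp_bpt hε)).norm
  calc dampingDefect ε F G
      ≤ ∫ θ, 2 * M * ‖1 - damp ε (G (bpt θ))‖ + 2 * (R (bpt θ)).re ∂arcM := by
        refine integral_mono (hF.integrable_re_mul_norm_one_sub_damp hG hε)
          ((hint.const_mul _).add (hR.integrable_re_comp_bpt.const_mul 2)) fun θ => ?_
        have hθ := bpt_mem_closedBall θ
        have hone := norm_one_sub_damp_le_one hε (hG.re_nonneg hθ)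
        beta_reduce
        nlinarith [mul_le_mul_of_nonneg_right (hle _ hθ) (norm_nonneg (1 - damp ε (G (bpt θ)))),
          mul_le_mul_of_nonneg_left hone (hR.re_nonneg hθ)]
    _ = 2 * M * ∫ θ, ‖1 - damp ε (G (bpt θ))‖ ∂arcM + 2 * b := by
        rw [integral_add (hint.const_mul _) (hR.integrable_re_comp_bpt.const_mul 2),
          integral_const_mul, integral_const_mul, hR.integral_re_comp_bpt]
    _ ≤ 2 * M * √(ε * d) + 2 * b := by
        gcongr
        exact hG.integral_norm_one_sub_damp_le hε

end IsCaratheodory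

lemma norm_sub_ofReal_le_norm {w : ℂ} {c : ℝ} (hc : 0 ≤ c) (hw : c / 2 ≤ w.re) :
    ‖w - c‖ ≤ ‖w‖ := by
  rw [← sq_le_sq₀ (norm_nonneg _) (norm_nonneg _), Complex.sq_norm, Complex.sq_norm]
  simp only [normSq_apply, sub_re, sub_im, ofReal_re, ofReal_im]
  nlinarith

lemma norm_mul_one_sub_add_conj_le {w : ℂ} {c : ℝ} (hc : 0 ≤ c) (hw : c / 2 ≤ w.re) (u : ℂ) :
    ‖w * (1 - u) + conj ((w - c) * (1 - u))‖ ≤ 2 * w.re * ‖1 - u‖ + ‖w‖ * ‖u - conj u‖ := by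
  have hsplit : w * (1 - u) + conj ((w - c) * (1 - u)) =
      (2 * w.re - c : ℝ) * (1 - u) + conj (w - c) * (u - conj u) := by
    rw [ofReal_sub, ← add_conj]
    simp only [map_mul, map_sub, map_one, conj_ofReal]
    ring
  rw [hsplit]
  refine norm_add_le_of_le ?_ ?_
  · rw [norm_mul, norm_real, Real.norm_of_nonneg (by linarith)]
    gcongr
    linarith
  · rw [norm_mul, RCLike.norm_conj]
    gcongr
    exact norm_sub_ofReal_le_norm hc hw

section Family

variable {ι : Type*} [Fintype ι] {ε : ℝ}

lemma norm_mul_one_sub_prod_damp_add_conj_le {w : ι → ℂ} (hε : 0 ≤ ε)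
    (hw : ∀ i, 0 ≤ (w i).re) {c : ℝ} (hc : 0 ≤ c) {j : ι} (hj : c / 2 ≤ (w j).re) :
    ‖w j * (1 - ∏ i, damp ε (w i)) + conj ((w j - c) * (1 - ∏ i, damp ε (w i)))‖ ≤
      ∑ l, (2 * (w j).re * ‖1 - damp ε (w l)‖ + ε * ‖w j * damp ε (w j)‖ ^ 2 +
        ε * ‖w l * damp ε (w l)‖ ^ 2) := by
  refine (norm_mul_one_sub_add_conj_le hc hj _).trans ?_
  have hone : 2 * (w j).re * ‖1 - ∏ i, damp ε (w i)‖ ≤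
      ∑ l, 2 * (w j).re * ‖1 - damp ε (w l)‖ := by
    rw [← Finset.mul_sum]
    exact mul_le_mul_of_nonneg_left (norm_one_sub_prod_damp_le hε hw)
      (mul_nonneg zero_le_two (hw j))
  refine (add_le_add hone (norm_mul_norm_prod_damp_sub_conj_le hε hw j)).trans ?_
  rw [← Finset.sum_add_distrib]
  refine Finset.sum_le_sum fun l _ => ?_
  have hamgm := mul_le_mul_of_nonneg_left
    (two_mul_le_add_sq ‖w j * damp ε (w j)‖ ‖w l * damp ε (w l)‖) hε
  linarith

variable {F : ι → ℂ → ℂ} {c : ι → ℝ}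

lemma analyticOnNhd_prod_damp (hF : ∀ i, IsCaratheodory (F i) (c i)) (hε : 0 ≤ ε) :
    AnalyticOnNhd ℂ (fun z => ∏ i, damp ε (F i z)) (closedBall 0 1) :=
  Finset.univ.analyticOnNhd_fun_prod fun i _ => (hF i).analyticOnNhd_damp hε

-- The density of `F j (1 - U)` is corrected by `conj ((F j - c j) (1 - U))`: the unbounded `F j`
-- is thereby replaced by `2 Re (F j)`, whose integral is under control.
lemma hasKaBound_mul_one_sub_prod_damp (hF : ∀ i, IsCaratheodory (F i) (c i)) (hε : 0 ≤ ε)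
    (j : ι) :
    HasKaBound (fun z => F j z * (1 - ∏ i, damp ε (F i z)))
      (∑ l, (dampingDefect ε (F j) (F l) + dampingDefect ε (F j) (F j) +
        dampingDefect ε (F l) (F l))) := by
  have hU : AnalyticOnNhd ℂ (fun z => 1 - ∏ i, damp ε (F i z)) (closedBall 0 1) :=
    analyticOnNhd_const.sub (analyticOnNhd_prod_damp hF hε)
  have hA : AnalyticOnNhd ℂ (fun z => F j z * (1 - ∏ i, damp ε (F i z))) (closedBall 0 1) :=
    (hF j).analyticOnNhd.mul hU
  have hB : AnalyticOnNhd ℂ (fun z => (F j z - c j) * (1 - ∏ i, damp ε (F i z)))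
      (closedBall 0 1) := ((hF j).analyticOnNhd.sub analyticOnNhd_const).mul hU
  refine (hasKaBound_of_analyticOnNhd_add_conj hA hB
    (by rw [(hF j).map_zero, sub_self, zero_mul])).mono ?_
  have hdefect (l : ι) := (hF j).integrable_re_mul_norm_one_sub_damp (hF l) hε
  have hsq (l : ι) := (hF l).integrable_norm_mul_damp_sq hε
  have hdefect_sq (l : ι) : Integrable (fun θ => 2 * (F j (bpt θ)).re *
      ‖1 - damp ε (F l (bpt θ))‖ + ε * ‖F j (bpt θ) * damp ε (F j (bpt θ))‖ ^ 2) arcM :=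
    (hdefect l).add (hsq j)
  have hterm (l : ι) : Integrable (fun θ => 2 * (F j (bpt θ)).re * ‖1 - damp ε (F l (bpt θ))‖ +
      ε * ‖F j (bpt θ) * damp ε (F j (bpt θ))‖ ^ 2 +
      ε * ‖F l (bpt θ) * damp ε (F l (bpt θ))‖ ^ 2) arcM := (hdefect_sq l).add (hsq l)
  refine (integral_mono_of_nonneg (ae_of_all _ fun θ => norm_nonneg _)
    (integrable_finsetSum _ fun l _ => hterm l) (ae_of_all _ fun θ =>
      norm_mul_one_sub_prod_damp_add_conj_le (w := fun i => F i (bpt θ)) hε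
        (fun i => (hF i).re_nonneg (bpt_mem_closedBall θ)) (hF j).nonneg
        ((hF j).half_le_re _ (bpt_mem_closedBall θ)))).trans ?_
  rw [integral_finsetSum _ fun l _ => hterm l]
  refine Finset.sum_le_sum fun l _ => ?_
  rw [integral_add (hdefect_sq l) (hsq l), integral_add (hdefect l) (hsq j)]
  exact add_le_add (add_le_add le_rfl ((hF j).integral_norm_mul_damp_sq_le_dampingDefect hε))
    ((hF l).integral_norm_mul_damp_sq_le_dampingDefect hε)

end Family

/-! ### Cauchy integrals of positive densities -/

lemma half_le_re_inv_one_sub {w : ℂ} (hw : ‖w‖ < 1) : 1 / 2 ≤ ((1 - w)⁻¹).re := by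
  have hne : 1 - w ≠ 0 := sub_ne_zero.2 fun h => by simp [← h] at hw
  have hsq : normSq w < 1 := by
    rw [← Complex.sq_norm]
    exact pow_lt_one₀ (norm_nonneg w) hw two_ne_zero
  rw [inv_re, div_le_div_iff₀ two_pos (normSq_pos.2 hne)]
  simp only [normSq_apply, sub_re, sub_im, one_re, one_im] at hsq ⊢
  linarith

lemma half_integral_le_re_cauchyIntegral {k : ℝ → ℝ} (hk : Integrable k arcM)
    (hk0 : ∀ θ, 0 ≤ k θ) {z : ℂ} (hz : z ∈ uDisc) :
    (∫ θ, k θ ∂arcM) / 2 ≤ (cauchyIntegral (fun θ => (k θ : ℂ)) z).re := by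
  have hker := integrable_cauchyKernel (hk.ofReal (𝕜 := ℂ)) hz
  have hre : (cauchyIntegral (fun θ => (k θ : ℂ)) z).re =
      ∫ θ, ((k θ : ℂ) / (1 - conj (bpt θ) * z)).re ∂arcM := (integral_re hker).symm
  rw [hre, div_eq_mul_one_div, ← integral_mul_const]
  refine integral_mono (hk.mul_const _) hker.re fun θ => ?_
  have hlt : ‖conj (bpt θ) * z‖ < 1 := by simpa [uDisc] using hz
  have hmul := mul_le_mul_of_nonneg_left (half_le_re_inv_one_sub hlt) (hk0 θ)
  simpa only [div_eq_mul_inv, re_ofReal_mul, RCLike.re_eq_complex_re] using hmul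

lemma re_cauchyIntegral_le_re_cauchyIntegral {k l : ℝ → ℝ} (hk : Integrable k arcM)
    (hl : Integrable l arcM) (hkl : ∀ θ, k θ ≤ l θ) {z : ℂ} (hz : z ∈ uDisc) :
    (cauchyIntegral (fun θ => (k θ : ℂ)) z).re ≤ (cauchyIntegral (fun θ => (l θ : ℂ)) z).re := by
  have hkC : Integrable (fun θ => (k θ : ℂ)) arcM := hk.ofReal
  have hlC : Integrable (fun θ => (l θ : ℂ)) arcM := hl.ofReal
  have hsub := half_integral_le_re_cauchyIntegral (k := fun θ => l θ - k θ) (hl.sub hk)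
    (fun θ => sub_nonneg.2 (hkl θ)) hz
  simp only [ofReal_sub] at hsub
  rw [cauchyIntegral_sub hlC hkC hz, sub_re] at hsub
  have hnonneg : 0 ≤ ∫ θ, (l θ - k θ) ∂arcM := integral_nonneg fun θ => sub_nonneg.2 (hkl θ)
  linarith

lemma isCaratheodory_cauchyIntegral_dilate {k : ℝ → ℝ} (hk : Integrable k arcM)
    (hk0 : ∀ θ, 0 ≤ k θ) {r : ℝ} (hr : r ∈ Ioo (0 : ℝ) 1) :
    IsCaratheodory (fun z => cauchyIntegral (fun θ => (k θ : ℂ)) (r * z)) (∫ θ, k θ ∂arcM) where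
  analyticOnNhd := (analyticOnDisc_cauchyIntegral hk.ofReal).analyticOnNhd_dilate hr
  map_zero := by rw [mul_zero, cauchyIntegral_zero, integral_complex_ofReal]
  half_le_re _ hz := half_integral_le_re_cauchyIntegral hk hk0 (ofReal_mul_mem_uDisc hr hz)

/-- The length of the part of `w` pointing in the direction `I ^ n`, so that
`w = ∑ n, I ^ n * axisPart n w` with nonnegative coefficients. -/
def axisPart (n : Fin 4) (w : ℂ) : ℝ := max (conj (I ^ (n : ℕ)) * w).re 0

lemma axisPart_nonneg (n : Fin 4) (w : ℂ) : 0 ≤ axisPart n w := le_max_right _ _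

lemma axisPart_le_norm (n : Fin 4) (w : ℂ) : axisPart n w ≤ ‖w‖ :=
  max_le ((re_le_norm _).trans_eq (by simp)) (norm_nonneg w)

lemma sum_I_pow_mul_axisPart (w : ℂ) : ∑ n : Fin 4, I ^ (n : ℕ) * axisPart n w = w := by
  have hre : ((max w.re 0 : ℝ) : ℂ) - (max (-w.re) 0 : ℝ) = w.re := by
    rw [← ofReal_sub, max_zero_sub_max_neg_zero_eq_self]
  have him : ((max w.im 0 : ℝ) : ℂ) - (max (-w.im) 0 : ℝ) = w.im := by
    rw [← ofReal_sub, max_zero_sub_max_neg_zero_eq_self]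
  have hI3 : I ^ 3 = -I := by rw [pow_succ, I_sq, neg_one_mul]
  rw [Fin.sum_univ_four]
  simp only [axisPart, Fin.coe_ofNat_eq_mod, Nat.reduceMod, pow_zero, pow_one, I_sq, hI3, map_one,
    map_neg, conj_I, one_mul, neg_mul, neg_neg, neg_re, I_mul_re]
  linear_combination hre + I * him + re_add_im w

lemma integrable_axisPart {h : ℝ → ℂ} (hh : Integrable h arcM) (n : Fin 4) :
    Integrable (fun θ => axisPart n (h θ)) arcM :=
  (hh.const_mul _).re.pos_part

lemma cauchyIntegral_eq_sum_axisPart {h : ℝ → ℂ} (hh : Integrable h arcM) {z : ℂ}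
    (hz : z ∈ uDisc) : cauchyIntegral h z =
      ∑ n : Fin 4, I ^ (n : ℕ) * cauchyIntegral (fun θ => (axisPart n (h θ) : ℂ)) z := by
  have hpart (n : Fin 4) : Integrable (fun θ => I ^ (n : ℕ) * (axisPart n (h θ) : ℂ)) arcM :=
    (integrable_axisPart hh n).ofReal.const_mul _
  calc cauchyIntegral h z
      = ∫ θ, ∑ n : Fin 4, I ^ (n : ℕ) * axisPart n (h θ) / (1 - conj (bpt θ) * z) ∂arcM := by
        simp only [← Finset.sum_div, sum_I_pow_mul_axisPart, cauchyIntegral]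
    _ = ∑ n : Fin 4, cauchyIntegral (fun θ => I ^ (n : ℕ) * (axisPart n (h θ) : ℂ)) z :=
        integral_finsetSum _ fun n _ => integrable_cauchyKernel (hpart n) hz
    _ = ∑ n : Fin 4, I ^ (n : ℕ) * cauchyIntegral (fun θ => (axisPart n (h θ) : ℂ)) z := by
        simp only [cauchyIntegral_const_mul]

lemma HasKaBound.dilate {f : ℂ → ℂ} {c : ℝ} (hf : HasKaBound f c) {r : ℝ}
    (hr : r ∈ Ioo (0 : ℝ) 1) : HasKaBound (fun z => f (r * z)) (4 * c) := by
  obtain ⟨h, hh, hhc, hfh⟩ := hf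
  refine ((HasKaBound.sum Finset.univ fun n _ => (isCaratheodory_cauchyIntegral_dilate
    (integrable_axisPart hh n) (fun θ => axisPart_nonneg n (h θ)) hr).hasKaBound.const_mul
      (I ^ (n : ℕ))).mono ?_).congr fun z hz => ?_
  · calc ∑ n : Fin 4, ‖I ^ (n : ℕ)‖ * ∫ θ, axisPart n (h θ) ∂arcM
        ≤ ∑ _n : Fin 4, c := Finset.sum_le_sum fun n _ => by
          rw [norm_pow, norm_I, one_pow, one_mul]
          exact (integral_mono (integrable_axisPart hh n) hh.norm
            fun θ => axisPart_le_norm n (h θ)).trans hhc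
      _ = 4 * c := by simp
  · have hrz := ofReal_mul_mem_uDisc hr (ball_subset_closedBall hz)
    rw [hfh _ hrz, cauchyIntegral_eq_sum_axisPart hh hrz]

/-! ### Density of polynomials and convergence of dilates -/

instance fact_two_pi_pos : Fact (0 < 2 * Real.pi) := ⟨Real.two_pi_pos⟩

section Density

variable {h : ℝ → ℂ} {η : ℝ}

lemma integrable_comp_coe_addCircle (g : C(AddCircle (2 * Real.pi), ℂ)) :
    Integrable (fun θ : ℝ => g θ) arcM :=
  integrable_arcM_of_continuous (g.continuous.comp (AddCircle.continuous_mk' _))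

lemma exists_measurable_lift_addCircle (hh : AEStronglyMeasurable h arcM) :
    ∃ H : AddCircle (2 * Real.pi) → ℂ, Measurable H ∧ ∀ᵐ θ : ℝ ∂arcM, H θ = h θ := by
  obtain ⟨k, hk, hhk⟩ := hh
  have hIoc : ∀ᵐ θ ∂arcM, θ ∈ Ioc 0 (2 * Real.pi) :=
    Measure.ae_smul_measure (ae_restrict_mem measurableSet_Ioc) _
  refine ⟨AddCircle.liftIoc (2 * Real.pi) 0 k, ?_, ?_⟩
  · exact (hk.measurable.comp measurable_subtype_coe).comp
      (AddCircle.measurableEquivIoc (2 * Real.pi) 0).measurable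
  · filter_upwards [hIoc, hhk] with θ hθ hkθ
    rw [hkθ]
    exact AddCircle.liftIoc_coe_apply (by simpa using hθ)

lemma exists_continuousMap_integral_norm_sub_le (hh : Integrable h arcM) (hη : 0 < η) :
    ∃ g : C(AddCircle (2 * Real.pi), ℂ), ∫ θ : ℝ, ‖h θ - g θ‖ ∂arcM ≤ η := by
  obtain ⟨H, hHm, hH⟩ := exists_measurable_lift_addCircle hh.aestronglyMeasurable
  have hmk : AEMeasurable (fun θ : ℝ => (θ : AddCircle (2 * Real.pi))) arcM :=
    (AddCircle.continuous_mk' _).measurable.aemeasurable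
  have hHint : Integrable H (arcM.map (fun θ : ℝ => (θ : AddCircle (2 * Real.pi)))) := by
    rw [integrable_map_measure hHm.aestronglyMeasurable hmk]
    exact hh.congr (hH.mono fun θ hθ => hθ.symm)
  obtain ⟨g, hg, -⟩ := hHint.exists_boundedContinuous_integral_sub_le hη
  have hHg : Measurable fun x => ‖H x - g x‖ := (hHm.sub g.continuous.measurable).norm
  rw [integral_map hmk hHg.aestronglyMeasurable] at hg
  refine ⟨g.toContinuousMap, (integral_congr_ae ?_).trans_le hg⟩
  filter_upwards [hH] with θ hθ
  rw [hθ]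
  rfl

lemma exists_mem_span_fourier_integral_norm_sub_le (hh : Integrable h arcM) (hη : 0 < η) :
    ∃ t ∈ Submodule.span ℂ (range (@fourier (2 * Real.pi))),
      ∫ θ : ℝ, ‖h θ - t θ‖ ∂arcM ≤ η := by
  obtain ⟨g, hg⟩ := exists_continuousMap_integral_norm_sub_le hh (half_pos hη)
  have hgmem : g ∈ (Submodule.span ℂ (range (@fourier (2 * Real.pi)))).topologicalClosure := by
    rw [span_fourier_closure_eq_top]
    trivial
  obtain ⟨t, ht, hgt⟩ := Metric.mem_closure_iff.1 hgmem (η / 2) (half_pos hη)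
  have hhg : Integrable (fun θ : ℝ => ‖h θ - g θ‖) arcM :=
    (hh.sub (integrable_comp_coe_addCircle g)).norm
  refine ⟨t, ht, ?_⟩
  calc ∫ θ : ℝ, ‖h θ - t θ‖ ∂arcM ≤ ∫ θ : ℝ, ‖h θ - g θ‖ + η / 2 ∂arcM := by
        refine integral_mono (hh.sub (integrable_comp_coe_addCircle t)).norm
          (hhg.add (integrable_const _)) fun θ => ?_
        refine (norm_sub_le_norm_sub_add_norm_sub _ (g θ) _).trans ?_
        gcongr
        rw [← dist_eq_norm]
        exact (ContinuousMap.dist_apply_le_dist _).trans hgt.le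
    _ = ∫ θ : ℝ, ‖h θ - g θ‖ ∂arcM + η / 2 := by
        rw [integral_add hhg (integrable_const _), integral_const, probReal_univ, one_smul]
    _ ≤ η := by linarith

lemma fourier_coe_eq_bpt_zpow (n : ℤ) (θ : ℝ) :
    fourier n (θ : AddCircle (2 * Real.pi)) = bpt θ ^ n := by
  have hπ : (Real.pi : ℂ) ≠ 0 := ofReal_ne_zero.2 Real.pi_ne_zero
  rw [fourier_coe_apply, bpt, ← exp_int_mul]
  congr 1
  push_cast
  field_simp

lemma exists_polynomial_eq_cauchyIntegral_zpow (n : ℤ) :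
    ∃ p : ℂ[X], ∀ z ∈ uDisc, cauchyIntegral (fun θ => bpt θ ^ n) z = p.eval z := by
  have hX (m : ℕ) : AnalyticOnNhd ℂ (fun z : ℂ => z ^ m) (closedBall 0 1) :=
    analyticOnNhd_id.fun_pow m
  obtain ⟨m, rfl | rfl⟩ := n.eq_nat_or_neg
  · refine ⟨X ^ m, fun z hz => ?_⟩
    simpa using cauchyIntegral_comp_bpt (hX m) hz
  · refine ⟨C (conj (0 ^ m)), fun z hz => ?_⟩
    simpa [conj_bpt] using cauchyIntegral_conj_comp_bpt (hX m) hz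

lemma exists_polynomial_eq_cauchyIntegral_of_mem_span_fourier
    {t : C(AddCircle (2 * Real.pi), ℂ)}
    (ht : t ∈ Submodule.span ℂ (range (@fourier (2 * Real.pi)))) :
    ∃ p : ℂ[X], ∀ z ∈ uDisc, cauchyIntegral (fun θ => t θ) z = p.eval z := by
  induction ht using Submodule.span_induction with
  | mem x hx =>
    obtain ⟨n, rfl⟩ := hx
    simpa only [fourier_coe_eq_bpt_zpow] using exists_polynomial_eq_cauchyIntegral_zpow n
  | zero => exact ⟨0, fun z _ => by simp [cauchyIntegral]⟩
  | add x y _ _ hx hy =>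
    obtain ⟨p, hp⟩ := hx
    obtain ⟨q, hq⟩ := hy
    refine ⟨p + q, fun z hz => ?_⟩
    rw [eval_add, ← hp z hz, ← hq z hz]
    exact cauchyIntegral_add (integrable_comp_coe_addCircle x) (integrable_comp_coe_addCircle y) hz
  | smul a x _ hx =>
    obtain ⟨p, hp⟩ := hx
    refine ⟨C a * p, fun z hz => ?_⟩
    rw [eval_C_mul, ← hp z hz]
    exact cauchyIntegral_const_mul a _ z

lemma exists_polynomial_hasKaBound_sub {f : ℂ → ℂ} (hf : MemKa f) (hη : 0 < η) :
    ∃ p : ℂ[X], HasKaBound (fun z => f z - p.eval z) η := by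
  obtain ⟨h, hh, hfh : EqOn f (cauchyIntegral h) uDisc⟩ := hf
  obtain ⟨t, ht, hht⟩ := exists_mem_span_fourier_integral_norm_sub_le hh hη
  obtain ⟨p, hp⟩ := exists_polynomial_eq_cauchyIntegral_of_mem_span_fourier ht
  have htint := integrable_comp_coe_addCircle t
  refine ⟨p, _, hh.sub htint, hht, fun z hz => ?_⟩
  beta_reduce
  rw [hfh hz, ← hp z hz]
  exact (cauchyIntegral_sub hh htint hz).symm

end Density

lemma HasHinfBoundary.hasKaBound_mul {φ : ℂ → ℂ} {Φ : ℝ → ℂ} (hφ : HasHinfBoundary φ Φ)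
    {F : ℂ → ℂ} (hF : AnalyticOnNhd ℂ F (closedBall 0 1)) {C : ℝ}
    (hC : ∀ z ∈ closedBall (0 : ℂ) 1, ‖F z‖ ≤ C) :
    HasKaBound (fun z => φ z * F z) ((∫ θ, ‖Φ θ‖ ∂arcM) * C) := by
  have hφF := hφ.mul (hasHinfBoundary_of_analyticOnNhd hF)
  refine hφF.hasKaBound.mono ?_
  rw [← integral_mul_const]
  refine integral_mono hφF.integrable.norm (hφ.integrable.norm.mul_const C) fun θ => ?_
  beta_reduce
  rw [norm_mul]
  gcongr
  exact hC _ (bpt_mem_closedBall θ)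

lemma hasKaBound_of_forall_norm_le {F : ℂ → ℂ} (hF : AnalyticOnNhd ℂ F (closedBall 0 1)) {C : ℝ}
    (hC : ∀ z ∈ closedBall (0 : ℂ) 1, ‖F z‖ ≤ C) : HasKaBound F C := by
  have hone := hasHinfBoundary_of_analyticOnNhd (F := fun _ => 1) analyticOnNhd_const
  simpa using hone.hasKaBound_mul hF hC

lemma eventually_norm_sub_dilate_le {F : ℂ → ℂ} (hF : ContinuousOn F (closedBall 0 1)) {η : ℝ}
    (hη : 0 < η) :
    ∀ᶠ r : ℝ in 𝓝[<] 1, ∀ z ∈ closedBall (0 : ℂ) 1, ‖F z - F (r * z)‖ ≤ η := by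
  obtain ⟨δ, hδ, hclose⟩ := Metric.uniformContinuousOn_iff.1
    ((isCompact_closedBall (0 : ℂ) 1).uniformContinuousOn_of_continuous hF) η hη
  filter_upwards [eventually_mem_Ioo_nhdsLT_one,
    mem_nhdsWithin_of_mem_nhds (ball_mem_nhds (1 : ℝ) hδ)] with r hr hrδ z hz
  rw [← dist_eq_norm]
  refine (hclose z hz _ (ball_subset_closedBall (ofReal_mul_mem_uDisc hr hz)) ?_).le
  calc dist z (r * z) = dist r 1 * ‖z‖ := by
        rw [dist_comm, dist_eq_norm, dist_eq_norm, ← sub_one_mul, norm_mul, ← ofReal_one,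
          ← ofReal_sub, norm_real]
    _ ≤ dist r 1 * 1 := by gcongr; exact mem_closedBall_zero_iff.1 hz
    _ < δ := by rwa [mul_one]

lemma eventually_hasKaBound_sub_dilate {f : ℂ → ℂ} (hf : MemKa f) {η : ℝ} (hη : 0 < η) :
    ∀ᶠ r : ℝ in 𝓝[<] 1, HasKaBound (fun z => f z - f (r * z)) η := by
  obtain ⟨p, hp⟩ := exists_polynomial_hasKaBound_sub hf (η := η / 10) (by positivity)
  filter_upwards [eventually_mem_Ioo_nhdsLT_one,
    eventually_norm_sub_dilate_le p.continuous.continuousOn (half_pos hη)] with r hr hpr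
  have hpoly : HasKaBound (fun z => p.eval z - p.eval (r * z)) (η / 2) :=
    hasKaBound_of_forall_norm_le (((AnalyticOnNhd.eval_polynomial p).mono (subset_univ _)).sub
      (AnalyticOnDisc.analyticOnNhd_dilate p.differentiable.differentiableOn hr)) hpr
  refine (((hp.add hpoly).sub (hp.dilate hr)).mono (by linarith)).congr fun z _ => ?_
  ring

/-! ### A regularizing factor -/

lemma tendsto_integral_max_sub_natCast_zero {α : Type*} [MeasurableSpace α] {μ : Measure α}
    {k : α → ℝ} (hk : Integrable k μ) :
    Tendsto (fun n : ℕ => ∫ x, max (k x - n) 0 ∂μ) atTop (𝓝 0) := by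
  suffices Tendsto (fun n : ℕ => ∫ x, max (k x - n) 0 ∂μ) atTop (𝓝 (∫ _, 0 ∂μ)) by
    rwa [integral_zero] at this
  refine tendsto_integral_of_dominated_convergence (fun x => |k x|)
    (fun n => (hk.aestronglyMeasurable.sub aestronglyMeasurable_const).sup
      aestronglyMeasurable_const) hk.abs (fun n => .of_forall fun x => ?_)
    (.of_forall fun x => ?_)
  · rw [Real.norm_of_nonneg (le_max_right _ _)]
    exact max_le ((sub_le_self _ n.cast_nonneg).trans (le_abs_self _)) (abs_nonneg _)
  · refine tendsto_const_nhds.congr' ?_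
    filter_upwards [tendsto_natCast_atTop_atTop.eventually_ge_atTop (k x)] with n hn
    rw [max_eq_right (sub_nonpos.2 hn)]

lemma re_cauchyIntegral_le_add_re_cauchyIntegral_max_sub {k : ℝ → ℝ} (hk : Integrable k arcM)
    (M : ℝ) {z : ℂ} (hz : z ∈ uDisc) :
    (cauchyIntegral (fun θ => (k θ : ℂ)) z).re ≤
      M + (cauchyIntegral (fun θ => ((max (k θ - M) 0 : ℝ) : ℂ)) z).re := by
  have htail : Integrable (fun θ => max (k θ - M) 0) arcM := (hk.sub (integrable_const M)).pos_part
  have hconst : cauchyIntegral (fun _ => (M : ℂ)) z = M :=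
    cauchyIntegral_comp_bpt analyticOnNhd_const hz
  have hsplit : cauchyIntegral (fun θ => ((M + max (k θ - M) 0 : ℝ) : ℂ)) z =
      M + cauchyIntegral (fun θ => ((max (k θ - M) 0 : ℝ) : ℂ)) z := by
    have htailC : Integrable (fun θ => ((max (k θ - M) 0 : ℝ) : ℂ)) arcM := htail.ofReal
    have hadd := cauchyIntegral_add (integrable_const (M : ℂ)) htailC hz
    rw [hconst] at hadd
    simpa only [ofReal_add] using hadd
  rw [← ofReal_re M, ← add_re, ofReal_re, ← hsplit]
  exact re_cauchyIntegral_le_re_cauchyIntegral hk ((integrable_const M).add htail)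
    (fun θ => sub_le_iff_le_add'.1 (le_max_left _ _)) hz

lemma eventually_dampingDefect_dilate_le {k l : ℝ → ℝ} (hk : Integrable k arcM)
    (hk0 : ∀ θ, 0 ≤ k θ) (hl : Integrable l arcM) (hl0 : ∀ θ, 0 ≤ l θ) {η : ℝ} (hη : 0 < η) :
    ∀ᶠ ε : ℝ in 𝓝[>] 0, ∀ r ∈ Ioo (0 : ℝ) 1,
      dampingDefect ε (fun z => cauchyIntegral (fun θ => (k θ : ℂ)) (r * z))
        (fun z => cauchyIntegral (fun θ => (l θ : ℂ)) (r * z)) ≤ η := by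
  obtain ⟨M, hM⟩ := ((tendsto_integral_max_sub_natCast_zero hk).eventually_le_const
    (show 0 < η / 4 by positivity)).exists
  have htail : Integrable (fun θ => max (k θ - M) 0) arcM := (hk.sub (integrable_const _)).pos_part
  have hsqrt : Tendsto (fun ε => 2 * M * √(ε * ∫ θ, l θ ∂arcM)) (𝓝[>] 0) (𝓝 0) :=
    tendsto_nhdsWithin_of_tendsto_nhds (Continuous.tendsto' (by fun_prop) _ _ (by simp))
  filter_upwards [self_mem_nhdsWithin, hsqrt.eventually_le_const (half_pos hη)]
    with ε hε hsmall r hr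
  have hle := (isCaratheodory_cauchyIntegral_dilate hk hk0 hr).dampingDefect_le
    (isCaratheodory_cauchyIntegral_dilate htail (fun θ => le_max_right _ _) hr)
    (isCaratheodory_cauchyIntegral_dilate hl hl0 hr) (le_of_lt hε) M.cast_nonneg
    fun z hz => re_cauchyIntegral_le_add_re_cauchyIntegral_max_sub hk M (ofReal_mul_mem_uDisc hr hz)
  linarith

section Family

variable {ι : Type*} [Fintype ι] {k : ι → ℝ → ℝ}

lemma eventually_hasKaBound_mul_one_sub_prod_damp (hk : ∀ i, Integrable (k i) arcM)
    (hk0 : ∀ i θ, 0 ≤ k i θ) {η : ℝ} (hη : 0 < η) :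
    ∀ᶠ ε : ℝ in 𝓝[>] 0, ∀ r ∈ Ioo (0 : ℝ) 1, ∀ j,
      HasKaBound (fun z => cauchyIntegral (fun θ => (k j θ : ℂ)) (r * z) *
        (1 - ∏ i, damp ε (cauchyIntegral (fun θ => (k i θ : ℂ)) (r * z)))) η := by
  set δ : ℝ := η / (3 * (Fintype.card ι + 1)) with hδ
  have hδ0 : 0 < δ := by positivity
  have hdefect : ∀ᶠ ε : ℝ in 𝓝[>] 0, ∀ i j, ∀ r ∈ Ioo (0 : ℝ) 1,
      dampingDefect ε (fun z => cauchyIntegral (fun θ => (k i θ : ℂ)) (r * z))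
        (fun z => cauchyIntegral (fun θ => (k j θ : ℂ)) (r * z)) ≤ δ :=
    eventually_all.2 fun i => eventually_all.2 fun j =>
      eventually_dampingDefect_dilate_le (hk i) (hk0 i) (hk j) (hk0 j) hδ0
  filter_upwards [self_mem_nhdsWithin, hdefect] with ε hε hle r hr j
  refine (hasKaBound_mul_one_sub_prod_damp
    (fun i => isCaratheodory_cauchyIntegral_dilate (hk i) (hk0 i) hr) (le_of_lt hε) j).mono ?_
  refine (Finset.sum_le_sum fun l _ => add_le_add_three (hle j l r hr) (hle j j r hr)
    (hle l l r hr)).trans ?_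
  rw [Finset.sum_const, Finset.card_univ, nsmul_eq_mul, hδ]
  field_simp
  linarith

lemma norm_mul_prod_damp_le_inv {ε : ℝ} (hε : 0 < ε) {w : ι → ℂ} (hw : ∀ i, 0 ≤ (w i).re) (j : ι) :
    ‖w j * ∏ i, damp ε (w i)‖ ≤ ε⁻¹ := by
  classical
  rw [← Finset.mul_prod_erase _ _ (Finset.mem_univ j), ← mul_assoc, norm_mul]
  exact (mul_le_of_le_one_right (norm_nonneg _) (norm_prod_le_one _ fun i _ =>
    norm_damp_le_one hε.le (hw i))).trans (norm_mul_damp_le_inv hε (hw j))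

end Family

-- `U` is the product of the damping factors of the eight positive parts of `F` and `G`.
lemma exists_regularizing_factor {F G : ℝ → ℂ} (hF : Integrable F arcM) (hG : Integrable G arcM)
    {η : ℝ} (hη : 0 < η) :
    ∃ C : ℝ, ∀ r ∈ Ioo (0 : ℝ) 1, ∃ U : ℂ → ℂ, AnalyticOnNhd ℂ U (closedBall 0 1) ∧
      HasKaBound (fun z => cauchyIntegral F (r * z) * (1 - U z)) η ∧
      ∀ z ∈ closedBall (0 : ℂ) 1, ‖cauchyIntegral G (r * z) * U z‖ ≤ C := by
  let k : Fin 4 ⊕ Fin 4 → ℝ → ℝ :=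
    Sum.elim (fun n θ => axisPart n (F θ)) fun n θ => axisPart n (G θ)
  have hk : ∀ i, Integrable (k i) arcM :=
    Sum.rec (integrable_axisPart hF) (integrable_axisPart hG)
  have hk0 : ∀ i θ, 0 ≤ k i θ :=
    Sum.rec (fun n θ => axisPart_nonneg n (F θ)) fun n θ => axisPart_nonneg n (G θ)
  obtain ⟨ε, hε, hε0 : 0 < ε⟩ := ((eventually_hasKaBound_mul_one_sub_prod_damp hk hk0
    (show 0 < η / 4 by positivity)).and self_mem_nhdsWithin).exists
  refine ⟨4 * ε⁻¹, fun r hr => ?_⟩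
  have hP (i : Fin 4 ⊕ Fin 4) := isCaratheodory_cauchyIntegral_dilate (hk i) (hk0 i) hr
  refine ⟨_, analyticOnNhd_prod_damp hP hε0.le, ?_, fun z hz => ?_⟩
  · refine ((HasKaBound.sum Finset.univ fun n _ => (hε r hr (.inl n)).const_mul
      (I ^ (n : ℕ))).mono (le_of_eq (by simp; ring))).congr fun z hz => ?_
    · beta_reduce
      rw [cauchyIntegral_eq_sum_axisPart hF
        (ofReal_mul_mem_uDisc hr (ball_subset_closedBall hz)), Finset.sum_mul]
      exact Finset.sum_congr rfl fun n _ => mul_assoc _ _ _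
  · rw [cauchyIntegral_eq_sum_axisPart hG (ofReal_mul_mem_uDisc hr hz), Finset.sum_mul]
    refine (norm_sum_le_of_le _ (n := fun _ => ε⁻¹) fun n _ => ?_).trans_eq (by simp)
    rw [mul_assoc, norm_mul, norm_pow, norm_I, one_pow, one_mul]
    exact norm_mul_prod_damp_le_inv hε0 (fun i => (hP i).re_nonneg hz) (.inr n)

/-! ### Approximation by polynomial multiples -/

section PolynomialMultiples

variable {ϑ : ℂ → ℂ} {Θ : ℝ → ℂ}

lemma HasHinfBoundary.exists_polynomial_hasKaBound_mul_sub (hϑ : HasHinfBoundary ϑ Θ) {b : ℂ → ℂ}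
    (hb : AnalyticOnNhd ℂ b (closedBall 0 1)) {η : ℝ} (hη : 0 < η) :
    ∃ q : ℂ[X], HasKaBound (fun z => ϑ z * (b z - q.eval z)) η := by
  set S := ∫ θ, ‖Θ θ‖ ∂arcM
  have : 0 ≤ S := integral_nonneg fun θ => norm_nonneg _
  obtain ⟨q, hq⟩ := exists_polynomial_near hb (η := η / (S + 1)) (by positivity)
  refine ⟨q, (hϑ.hasKaBound_mul (hb.sub ((AnalyticOnNhd.eval_polynomial q).mono (subset_univ _)))
    fun z hz => (hq z hz).le).mono ?_⟩
  rw [mul_div_left_comm]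
  exact mul_le_of_le_one_right hη.le (div_le_one_of_le₀ (by linarith) (by positivity))

lemma HasHinfBoundary.eventually_hasKaBound_dilate_sub_mul (hϑ : HasHinfBoundary ϑ Θ) (C : ℝ)
    {η : ℝ} (hη : 0 < η) :
    ∀ᶠ r : ℝ in 𝓝[<] 1, ∀ b : ℂ → ℂ, AnalyticOnNhd ℂ b (closedBall 0 1) →
      (∀ z ∈ closedBall (0 : ℂ) 1, ‖b z‖ ≤ C) →
      HasKaBound (fun z => (ϑ (r * z) - ϑ z) * b z) η := by
  have hlim := hϑ.tendsto_integral_norm_dilate_sub.mul_const C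
  rw [zero_mul] at hlim
  filter_upwards [eventually_mem_Ioo_nhdsLT_one, hlim.eventually_le_const hη] with r hr hle b hb hC
  exact (((hasHinfBoundary_of_analyticOnNhd (hϑ.analyticOnNhd_dilate hr)).sub
    hϑ).hasKaBound_mul hb hC).mono hle

lemma HasHinfBoundary.exists_polynomial_kaNorm_sub_mul_lt (hϑ : HasHinfBoundary ϑ Θ)
    {f g : ℂ → ℂ} (hf : MemKa f) (hg : MemKa g) (hfg : ∀ z ∈ uDisc, f z = ϑ z * g z) {ε : ℝ}
    (hε : 0 < ε) : ∃ q : ℂ[X], kaNorm (fun z => f z - ϑ z * q.eval z) < ε := by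
  have hη : 0 < ε / 5 := by positivity
  have hfdil := eventually_hasKaBound_sub_dilate hf hη
  obtain ⟨F, hF, hfF : EqOn f (cauchyIntegral F) uDisc⟩ := hf
  obtain ⟨G, hG, hgG : EqOn g (cauchyIntegral G) uDisc⟩ := hg
  obtain ⟨C, hC⟩ := exists_regularizing_factor hF hG hη
  obtain ⟨r, hr, hfr, hϑr⟩ := (eventually_mem_Ioo_nhdsLT_one.and
    (hfdil.and (hϑ.eventually_hasKaBound_dilate_sub_mul C hη))).exists
  obtain ⟨U, hU, hfU, hgU⟩ := hC r hr
  have hb : AnalyticOnNhd ℂ (fun z => cauchyIntegral G (r * z) * U z) (closedBall 0 1) :=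
    ((analyticOnDisc_cauchyIntegral hG).analyticOnNhd_dilate hr).mul hU
  obtain ⟨q, hq⟩ := hϑ.exists_polynomial_hasKaBound_mul_sub hb hη
  have htotal : HasKaBound (fun z => f z - ϑ z * q.eval z) (ε / 5 + ε / 5 + ε / 5 + ε / 5) := by
    refine (((hfr.add hfU).add (hϑr _ hb hgU)).add hq).congr fun z hz => ?_
    have hrz : (r : ℂ) * z ∈ uDisc := ofReal_mul_mem_uDisc hr (ball_subset_closedBall hz)
    linear_combination (1 - U z) * hfF hrz + U z * hfg _ hrz + ϑ (r * z) * U z * hgG hrz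
  exact ⟨q, htotal.kaNorm_le.trans_lt (by linarith)⟩

end PolynomialMultiples

/-- for an inner function `ϑ`, the set
`ϑ(𝒦_a) = {f ∈ 𝒦_a : f/ϑ ∈ 𝒦_a}` equals the norm closure in `𝒦_a` of the analytic
polynomial multiples of `ϑ`. -/
theorem theta_Ka_eq_closure_poly_multiples (ϑ : ℂ → ℂ) (hϑ : IsInner ϑ) :
    {f : ℂ → ℂ | MemKa f ∧ ∃ g : ℂ → ℂ, MemKa g ∧ ∀ z ∈ uDisc, f z = ϑ z * g z} =
      {f : ℂ → ℂ | MemKa f ∧ ∀ ε > (0 : ℝ), ∃ q : Polynomial ℂ,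
        kaNorm (fun z => f z - ϑ z * q.eval z) < ε} := by
  obtain ⟨hϑ, Θ, hΘ, hΘ1⟩ := hϑ
  have hϑΘ : HasHinfBoundary ϑ Θ := ⟨hϑ, hΘ⟩
  ext f
  refine and_congr_right fun hf => ⟨?_, fun hclosure => ?_⟩
  · rintro ⟨g, hg, hfg⟩ ε hε
    exact hϑΘ.exists_polynomial_kaNorm_sub_mul_lt hf hg hfg hε
  · exact exists_memKa_factor_of_forall_kaNorm_lt hϑΘ hΘ1 hf hclosure
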